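/- Let n ≥ 1, α > 0 and 1 < q ≤ 1 + α/n. Suppose the coefficients a_{ij} satisfy condition (8) with this α and some c > 0. Let u be a non-negative function, continuous on [0,∞) × ℝⁿ and C¹ on S with |u|^q locally integrable, which is an entire weak solution on S of u_t ≥ Lu + |u|^{q−1}u, with arbitrary initial data u(0,·). Then u = 0 in S. -/

import Mathlib

open MeasureTheory Real

noncomputable section

/-- Euclidean space ℝⁿ. -/
abbrev Xn (n : ℕ) : Type := EuclideanSpace ℝ (Fin n)

/-- Points of the half-space `S = (0,∞) × ℝⁿ`. -/
abbrev Pt (n : ℕ) : Type := ℝ × Xn n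

/-- The half-space `S = (0,∞) × ℝⁿ`. -/
def halfSpace (n : ℕ) : Set (Pt n) := {p | 0 < p.1}

/-- Partial derivative in the time variable. -/
noncomputable def pdT {n : ℕ} (w : Pt n → ℝ) (p : Pt n) : ℝ :=
  fderiv ℝ w p (1, 0)

/-- Partial derivative in the space variable `x_j`. -/
noncomputable def pdX {n : ℕ} (w : Pt n → ℝ) (j : Fin n) (p : Pt n) : ℝ :=
  fderiv ℝ w p (0, EuclideanSpace.single j 1)

/-- The odd power function `x ↦ |x|^{q-1} x`. -/
noncomputable def oddPow (q x : ℝ) : ℝ := |x| ^ (q - 1) * x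

/-- Condition (8): `𝒜(R) ≤ c R^{2-α}` for all `R > 1`, expressed as an a.e. bound
on the majorant `A` over the region `{(t,x) : t > 0, R/2 < |x| < R}`. -/
def Cond8 {n : ℕ} (A : Pt n → ℝ) (α c : ℝ) : Prop :=
  ∀ R : ℝ, 1 < R →
    ∀ᵐ p ∂(volume.restrict
        {p : Pt n | 0 < p.1 ∧ R / 2 < ‖p.2‖ ∧ ‖p.2‖ < R}),
      A p ≤ c * R ^ (2 - α)

/-- `u` is an entire weak solution of `u_t ≥ Lu + |u|^{q−1}u` in `S`. -/
def WeakSuperSol {n : ℕ} (a : Fin n → Fin n → Pt n → ℝ) (q : ℝ)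
    (u : Pt n → ℝ) : Prop :=
  ∀ φ : Pt n → ℝ, ContDiff ℝ (⊤ : ℕ∞) φ → HasCompactSupport φ →
    tsupport φ ⊆ halfSpace n → (∀ p, 0 ≤ φ p) →
    0 ≤ ∫ p in halfSpace n,
        (pdT u p * φ p + ∑ i, ∑ j, a i j p * pdX φ i p * pdX u j p
          - oddPow q (u p) * φ p)

/-- `v` is an entire weak solution of `v_t ≤ Lv + |v|^{q−1}v` in `S`. -/
def WeakSubSol {n : ℕ} (a : Fin n → Fin n → Pt n → ℝ) (q : ℝ)
    (v : Pt n → ℝ) : Prop :=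
  ∀ φ : Pt n → ℝ, ContDiff ℝ (⊤ : ℕ∞) φ → HasCompactSupport φ →
    tsupport φ ⊆ halfSpace n → (∀ p, 0 ≤ φ p) →
    ∫ p in halfSpace n,
        (pdT v p * φ p + ∑ i, ∑ j, a i j p * pdX φ i p * pdX v j p
          - oddPow q (v p) * φ p) ≤ 0

/-! ### Scalar inequalities -/

lemma sc_young {ϑ K z0 Z : ℝ} (h0 : 0 < ϑ) (h1 : ϑ < 1) (hK : 0 ≤ K) (hz0 : 0 < z0) (hZ : 0 ≤ Z) :
    K * Z ^ ϑ ≤ K * z0 ^ (ϑ - 1) * Z + K * z0 ^ ϑ := by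
  rcases le_total Z z0 with h | h
  · have : Z ^ ϑ ≤ z0 ^ ϑ := Real.rpow_le_rpow hZ h h0.le
    have : K * Z ^ ϑ ≤ K * z0 ^ ϑ := by gcongr
    have : 0 ≤ K * z0 ^ (ϑ - 1) * Z := by positivity
    linarith
  · have hZp : 0 < Z := hz0.trans_le h
    have e : Z ^ ϑ = Z ^ (ϑ - 1) * Z := by
      rw [Real.rpow_sub_one hZp.ne']; field_simp
    have : Z ^ (ϑ - 1) ≤ z0 ^ (ϑ - 1) := Real.rpow_le_rpow_of_nonpos hz0 h (by linarith)
    have : K * (Z ^ (ϑ - 1) * Z) ≤ K * z0 ^ (ϑ - 1) * Z := by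
      rw [← mul_assoc]; gcongr
    have : 0 ≤ K * z0 ^ ϑ := by positivity
    rw [e]; linarith

/-- Young type inequality with cut-off weights. -/
lemma sc_young2 {r1 r2 K z0 X ζ : ℝ} {k : ℕ} (h1 : 0 < r1) (h2 : r1 < r2) (hK : 0 ≤ K)
    (hk : (k + 2 : ℝ) * (r1 / r2) ≤ k) (hz0 : 0 < z0) (hX : 0 ≤ X) (hζ0 : 0 ≤ ζ) (hζ1 : ζ ≤ 1) :
    K * (X ^ r1 * ζ ^ k) ≤
      K * z0 ^ (r1 / r2 - 1) * (X ^ r2 * ζ ^ (k + 2)) + K * z0 ^ (r1 / r2) := by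
  have hr2 : 0 < r2 := h1.trans h2
  have hϑ0 : 0 < r1 / r2 := by positivity
  have hϑ1 : r1 / r2 < 1 := by rw [div_lt_one hr2]; exact h2
  have key : X ^ r1 * ζ ^ k ≤ (X ^ r2 * ζ ^ (k + 2)) ^ (r1 / r2) := by
    rw [Real.mul_rpow (by positivity) (by positivity), ← Real.rpow_mul hX,
      mul_div_cancel₀ _ hr2.ne', ← Real.rpow_natCast ζ (k + 2), ← Real.rpow_mul hζ0,
      ← Real.rpow_natCast ζ k]
    have hk0 : 0 < (k + 2 : ℝ) * (r1 / r2) := by positivity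
    gcongr ?_ * ?_
    rcases hζ0.eq_or_lt with h | h
    · subst h
      rw [Real.zero_rpow (by linarith), Real.zero_rpow (by push_cast; linarith)]
    · apply Real.rpow_le_rpow_of_exponent_ge h hζ1
      push_cast; exact hk
  calc K * (X ^ r1 * ζ ^ k) ≤ K * (X ^ r2 * ζ ^ (k + 2)) ^ (r1 / r2) := by gcongr
    _ ≤ _ := sc_young hϑ0 hϑ1 hK hz0 (by positivity)

/-- Absorbing form. -/
lemma sc_youngA {r1 r2 K : ℝ} {k : ℕ} (h1 : 0 < r1) (h2 : r1 < r2) (hK : 0 ≤ K)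
    (hk : (k + 2 : ℝ) * (r1 / r2) ≤ k) (μ : ℝ) (hμ : 0 < μ) :
    ∃ C, 0 < C ∧ ∀ X ζ : ℝ, 0 ≤ X → 0 ≤ ζ → ζ ≤ 1 →
      K * (X ^ r1 * ζ ^ k) ≤ μ * (X ^ r2 * ζ ^ (k + 2)) + C := by
  have hr2 : 0 < r2 := h1.trans h2
  have hϑ1 : r1 / r2 < 1 := by rw [div_lt_one hr2]; exact h2
  have T : Filter.Tendsto (fun z : ℝ => K * z ^ (r1 / r2 - 1)) Filter.atTop (nhds (K * 0)) := by
    have := tendsto_rpow_neg_atTop (y := 1 - r1 / r2) (by linarith)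
    rw [neg_sub] at this
    exact this.const_mul K
  rw [mul_zero] at T
  obtain ⟨z0, hz, hz0⟩ := ((T.eventually (gt_mem_nhds hμ)).and
    (Filter.eventually_gt_atTop 0)).exists
  refine ⟨K * z0 ^ (r1 / r2) + 1, by positivity, fun X ζ hX h0 h1' => ?_⟩
  have := sc_young2 h1 h2 hK hk hz0 hX h0 h1'
  have : K * z0 ^ (r1 / r2 - 1) * (X ^ r2 * ζ ^ (k + 2)) ≤ μ * (X ^ r2 * ζ ^ (k + 2)) := by gcongr
  linarith

/-- Small remainder form. -/
lemma sc_youngB {r1 r2 K : ℝ} {k : ℕ} (h1 : 0 < r1) (h2 : r1 < r2) (hK : 0 ≤ K)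
    (hk : (k + 2 : ℝ) * (r1 / r2) ≤ k) (η : ℝ) (hη : 0 < η) :
    ∃ M, 0 < M ∧ ∀ X ζ : ℝ, 0 ≤ X → 0 ≤ ζ → ζ ≤ 1 →
      K * (X ^ r1 * ζ ^ k) ≤ M * (X ^ r2 * ζ ^ (k + 2)) + η := by
  have hr2 : 0 < r2 := h1.trans h2
  have hϑ0 : 0 < r1 / r2 := by positivity
  have T : Filter.Tendsto (fun z : ℝ => K * z ^ (r1 / r2)) (nhdsWithin 0 (Set.Ioi 0))
      (nhds (K * 0)) := by
    have : Filter.Tendsto (fun z : ℝ => z ^ (r1 / r2)) (nhds 0) (nhds (0 ^ (r1 / r2))) :=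
      (Real.continuous_rpow_const hϑ0.le).tendsto 0
    rw [Real.zero_rpow hϑ0.ne'] at this
    exact (this.mono_left nhdsWithin_le_nhds).const_mul K
  rw [mul_zero] at T
  obtain ⟨z0, hz, hz0⟩ := ((T.eventually (gt_mem_nhds hη)).and
    self_mem_nhdsWithin).exists
  have hz0 : 0 < z0 := hz0
  refine ⟨K * z0 ^ (r1 / r2 - 1) + 1, by positivity, fun X ζ hX h0 h1' => ?_⟩
  have := sc_young2 h1 h2 hK hk hz0 hX h0 h1'
  have : 0 ≤ X ^ r2 * ζ ^ (k + 2) := by positivity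
  linarith

lemma sc_low {U κ q : ℝ} (hU : 0 ≤ U) (hκ : 0 < κ) (hq : 0 < q) :
    (2 : ℝ) ^ (-q) * (U + κ) ^ q ≤ U ^ q + κ ^ q := by
  have e : (2 : ℝ) ^ (-q) * (U + κ) ^ q = ((U + κ) / 2) ^ q := by
    rw [Real.div_rpow (by positivity) (by norm_num), Real.rpow_neg (by norm_num)]; field_simp
  rw [e]
  rcases le_total U κ with h | h
  · have : ((U + κ) / 2) ^ q ≤ κ ^ q := by gcongr; linarith
    have : 0 ≤ U ^ q := by positivity
    linarith
  · have : ((U + κ) / 2) ^ q ≤ U ^ q := by gcongr; linarith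
    have : 0 ≤ κ ^ q := by positivity
    linarith

/-- Pointwise estimate for the first test function. -/
lemma sc_E1 {q γ K M C κ U ζ zt Quu Qzu Qzz : ℝ} {k : ℕ}
    (hq : 1 < q) (hγ : 0 < γ) (hγ1 : γ < 1) (hK : 0 ≤ K) (hM : 0 < M)
    (hκ : 0 < κ) (hκ1 : κ ≤ 1) (hU : 0 ≤ U) (hζ0 : 0 ≤ ζ) (hζ1 : ζ ≤ 1)
    (hzt : -zt ≤ K * M) (hzz : Qzz ≤ K * M)
    (hQ : ∀ x y : ℝ, 2 * x * y * Qzu ≤ x ^ 2 * Quu + y ^ 2 * Qzz)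
    (hY : ∀ X ζ : ℝ, 0 ≤ X → 0 ≤ ζ → ζ ≤ 1 →
      ((k + 2) / (1 - γ) * K + (k + 2) ^ 2 / (2 * γ) * K) * (X ^ (1 - γ) * ζ ^ k)
        ≤ 2 ^ (-q) * (X ^ (q - γ) * ζ ^ (k + 2)) + C) :
    - ((k + 2) / (1 - γ)) * ((U + κ) ^ (1 - γ) * ζ ^ (k + 1) * zt)
      - γ * ((U + κ) ^ (-γ - 1) * ζ ^ (k + 2) * Quu)
      + (k + 2) * ((U + κ) ^ (-γ) * ζ ^ (k + 1) * Qzu)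
      - M * U ^ q * ((U + κ) ^ (-γ) * ζ ^ (k + 2))
    ≤ - (γ / 2) * ((U + κ) ^ (-γ - 1) * ζ ^ (k + 2) * Quu) + M * (C + 1) := by
  set W := U + κ with hW
  have hWp : 0 < W := by positivity
  have hlow := sc_low hU hκ (by linarith : 0 < q)
  rw [← hW] at hlow
  have hWγ : 0 < W ^ (-γ) := by positivity
  have e1 : W ^ (-γ - 1) = W ^ (-γ) / W := Real.rpow_sub_one hWp.ne' _
  have e2 : W ^ (1 - γ) = W ^ (-γ) * W := by
    rw [← Real.rpow_add_one hWp.ne']; ring_nf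
  have e3 : W ^ (q - γ) = W ^ (-γ) * W ^ q := by
    rw [← Real.rpow_add hWp]; ring_nf
  have hκ2 : κ ^ q * W ^ (-γ) ≤ 1 := by
    have : W ^ (-γ) ≤ κ ^ (-γ) := Real.rpow_le_rpow_of_nonpos hκ (by linarith) (by linarith)
    calc κ ^ q * W ^ (-γ) ≤ κ ^ q * κ ^ (-γ) := by gcongr
      _ = κ ^ (q - γ) := by rw [← Real.rpow_add hκ]; ring_nf
      _ ≤ 1 := Real.rpow_le_one hκ.le hκ1 (by linarith)
  -- gradient term
  have g1 : (k + 2) * (W ^ (-γ) * ζ ^ (k + 1) * Qzu) ≤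
      (γ / 2) * (W ^ (-γ - 1) * ζ ^ (k + 2) * Quu)
        + (k + 2) ^ 2 / (2 * γ) * (K * M) * (W ^ (1 - γ) * ζ ^ k) := by
    have h := hQ (γ * ζ) ((k + 2) * W)
    have h' : ((k + 2) * W) ^ 2 * Qzz ≤ ((k + 2) * W) ^ 2 * (K * M) := by gcongr
    have h2 : 2 * (γ * ζ) * ((k + 2) * W) * Qzu ≤
      (γ * ζ) ^ 2 * Quu + ((k + 2) * W) ^ 2 * (K * M) := by linarith
    have h3 : 0 ≤ W ^ (-γ) * ζ ^ k / (2 * γ * W) := by positivity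
    have h4 := mul_le_mul_of_nonneg_left h2 h3
    rw [e1, e2]
    refine le_trans (le_of_eq ?_) (h4.trans (le_of_eq ?_))
    · rw [pow_succ]
      generalize ζ ^ k = z
      field_simp
    · rw [pow_add]
      generalize ζ ^ k = z
      generalize W ^ (-γ) = V
      have hWn := hWp.ne'
      have hγn := hγ.ne'
      field_simp
  have g2 : - ((k + 2) / (1 - γ)) * (W ^ (1 - γ) * ζ ^ (k + 1) * zt) ≤
      (k + 2) / (1 - γ) * (K * M) * (W ^ (1 - γ) * ζ ^ k) := by
    have h1γ : 0 < 1 - γ := by linarith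
    have : ζ * (-zt) ≤ K * M := by
      have : ζ * (-zt) ≤ ζ * (K * M) := by gcongr
      have : ζ * (K * M) ≤ 1 * (K * M) := by gcongr
      linarith
    have h3 : 0 ≤ (k + 2) / (1 - γ) * (W ^ (1 - γ) * ζ ^ k) := by positivity
    have h4 := mul_le_mul_of_nonneg_left this h3
    calc _ = (k + 2) / (1 - γ) * (W ^ (1 - γ) * ζ ^ k) * (ζ * (-zt)) := by ring
      _ ≤ _ := h4
      _ = _ := by ring
  have hY' := mul_le_mul_of_nonneg_left (hY W ζ hWp.le hζ0 hζ1) hM.le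
  have g3 : 2 ^ (-q) * (W ^ (q - γ) * ζ ^ (k + 2)) ≤ U ^ q * (W ^ (-γ) * ζ ^ (k + 2)) + 1 := by
    have hζs : ζ ^ (k + 2) ≤ 1 := pow_le_one₀ hζ0 hζ1
    have hζn : 0 ≤ ζ ^ (k + 2) := by positivity
    have h1 := mul_le_mul_of_nonneg_left hlow (by positivity : 0 ≤ W ^ (-γ) * ζ ^ (k + 2))
    have h2 : κ ^ q * W ^ (-γ) * ζ ^ (k + 2) ≤ 1 := mul_le_one₀ hκ2 hζn hζs
    rw [e3]; nlinarith
  have g3' := mul_le_mul_of_nonneg_left g3 hM.le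
  nlinarith

/-- Pointwise estimate for the second test function. -/
lemma sc_E2 {q γ K M C lam μ κ U ζ zt Quu Qzu Qzz τ : ℝ} {k : ℕ}
    (hq : 1 < q) (hM : 0 < M) (hlam : 0 < lam) (hμ : 0 < μ)
    (hτ : τ = 0 ∨ τ = 1)
    (hκ : 0 < κ) (hU : 0 ≤ U) (hζ0 : 0 ≤ ζ) (hζ1 : ζ ≤ 1)
    (hC : 0 ≤ C) (hκC : μ * 2 ^ q * κ ^ q ≤ C) (hK : 0 ≤ K)
    (hzt : -zt ≤ K * M * τ) (hzz : Qzz ≤ K * M * τ)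
    (hQ : ∀ x y : ℝ, 2 * x * y * Qzu ≤ x ^ 2 * Quu + y ^ 2 * Qzz)
    (hY1 : ∀ X ζ : ℝ, 0 ≤ X → 0 ≤ ζ → ζ ≤ 1 →
      ((k + 2) * K) * (X ^ (1 : ℝ) * ζ ^ k) ≤ μ / 2 * (X ^ q * ζ ^ (k + 2)) + C / 2)
    (hY2 : ∀ X ζ : ℝ, 0 ≤ X → 0 ≤ ζ → ζ ≤ 1 →
      ((k + 2) ^ 2 / (4 * lam) * K) * (X ^ (γ + 1) * ζ ^ k)
        ≤ μ / 2 * (X ^ q * ζ ^ (k + 2)) + C / 2) :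
    - (k + 2) * ((U + κ) * ζ ^ (k + 1) * zt)
      + (k + 2) * (ζ ^ (k + 1) * Qzu)
    ≤ lam * ((U + κ) ^ (-γ - 1) * ζ ^ (k + 2) * Quu)
      + M * (μ * 2 ^ q * (U ^ q * ζ ^ (k + 2) * τ) + 2 * C) := by
  set W := U + κ with hW
  have hWp : 0 < W := by positivity
  have hτ0 : 0 ≤ τ := by rcases hτ with h | h <;> rw [h]; norm_num
  have hτ1 : τ ≤ 1 := by rcases hτ with h | h <;> rw [h]; norm_num
  have hlow := sc_low hU hκ (by linarith : 0 < q)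
  rw [← hW, Real.rpow_neg (by norm_num), inv_mul_le_iff₀ (by positivity)] at hlow
  have e1 : W ^ (-γ - 1) = 1 / W ^ (γ + 1) := by
    rw [show -γ - 1 = -(γ + 1) by ring, Real.rpow_neg hWp.le, one_div]
  have hP : 0 < W ^ (γ + 1) := by positivity
  have g1 : (k + 2) * (ζ ^ (k + 1) * Qzu) ≤
      lam * (W ^ (-γ - 1) * ζ ^ (k + 2) * Quu)
        + (k + 2) ^ 2 / (4 * lam) * (K * M * τ) * (W ^ (γ + 1) * ζ ^ k) := by
    rw [e1]
    set P := W ^ (γ + 1)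
    have h := hQ (2 * lam * ζ) ((k + 2) * P)
    have h' : ((k + 2) * P) ^ 2 * Qzz ≤ ((k + 2) * P) ^ 2 * (K * M * τ) := by gcongr
    have h2 : 2 * (2 * lam * ζ) * ((k + 2) * P) * Qzu ≤
      (2 * lam * ζ) ^ 2 * Quu + ((k + 2) * P) ^ 2 * (K * M * τ) := by linarith
    have h3 : 0 ≤ ζ ^ k / (4 * lam * P) := by positivity
    have h4 := mul_le_mul_of_nonneg_left h2 h3
    refine le_trans (le_of_eq ?_) (h4.trans (le_of_eq ?_))
    · rw [pow_succ]
      generalize ζ ^ k = z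
      field_simp
      ring
    · rw [pow_add]
      generalize ζ ^ k = z
      have hPn := hP.ne'
      have hln := hlam.ne'
      field_simp
      ring
  have g2 : - (k + 2) * (W * ζ ^ (k + 1) * zt) ≤
      (k + 2) * (K * M * τ) * (W ^ (1 : ℝ) * ζ ^ k) := by
    rw [Real.rpow_one]
    have : ζ * (-zt) ≤ K * M * τ := by
      have : ζ * (-zt) ≤ ζ * (K * M * τ) := by gcongr
      have : ζ * (K * M * τ) ≤ 1 * (K * M * τ) := by gcongr
      linarith
    have h3 : 0 ≤ (k + 2) * (W * ζ ^ k) := by positivity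
    have h4 := mul_le_mul_of_nonneg_left this h3
    calc _ = (k + 2) * (W * ζ ^ k) * (ζ * (-zt)) := by ring
      _ ≤ _ := h4
      _ = _ := by ring
  have hMτ : 0 ≤ M * τ := by positivity
  have y1 := mul_le_mul_of_nonneg_left (hY1 W ζ hWp.le hζ0 hζ1) hMτ
  have y2 := mul_le_mul_of_nonneg_left (hY2 W ζ hWp.le hζ0 hζ1) hMτ
  have hζs : ζ ^ (k + 2) ≤ 1 := pow_le_one₀ hζ0 hζ1
  have g3 : μ * (W ^ q * ζ ^ (k + 2)) ≤ μ * 2 ^ q * (U ^ q * ζ ^ (k + 2)) + C := by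
    have h1 := mul_le_mul_of_nonneg_left hlow (by positivity : 0 ≤ μ * ζ ^ (k + 2))
    have h2 : μ * 2 ^ q * κ ^ q * ζ ^ (k + 2) ≤ μ * 2 ^ q * κ ^ q * 1 := by gcongr
    nlinarith
  have g3' := mul_le_mul_of_nonneg_left g3 hMτ
  have g4 : M * τ * (2 * C) ≤ M * 1 * (2 * C) := by gcongr
  nlinarith

/-! ### Integrability and smoothing -/

lemma hs_open (n : ℕ) : IsOpen (halfSpace n) := isOpen_lt continuous_const continuous_fst

lemma haar_vol (n : ℕ) : (volume : Measure (Pt n)).IsAddHaarMeasure :=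
  inferInstanceAs ((volume : Measure ℝ).prod (volume : Measure (Xn n))).IsAddHaarMeasure

lemma hs_meas (n : ℕ) : MeasurableSet (halfSpace n) := (hs_open n).measurableSet

lemma integ_of_bdd {n : ℕ} {f : Pt n → ℝ} {K : Set (Pt n)}
    (hm : AEStronglyMeasurable f (volume.restrict (halfSpace n))) (hK : IsCompact K)
    (hb : ∃ M, ∀ p ∈ K, |f p| ≤ M) (h0 : ∀ p, p ∈ halfSpace n → p ∉ K → f p = 0) :
    Integrable f (volume.restrict (halfSpace n)) := by
  obtain ⟨M, hM⟩ := hb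
  have hi : Integrable (K.indicator (fun _ => M)) (volume : Measure (Pt n)) :=
    (integrable_indicator_iff hK.measurableSet).2 (integrableOn_const hK.measure_lt_top.ne)
  refine hi.restrict.mono' hm ?_
  refine (ae_restrict_iff' (hs_meas n)).2 (Filter.Eventually.of_forall fun p hp => ?_)
  by_cases h : p ∈ K
  · simpa [h] using hM p h
  · simp [h, h0 p hp h]

lemma integ_cont {n : ℕ} {f : Pt n → ℝ} {K : Set (Pt n)}
    (hf : ContinuousOn f (halfSpace n)) (hK : IsCompact K) (hKS : K ⊆ halfSpace n)
    (h0 : ∀ p, p ∈ halfSpace n → p ∉ K → f p = 0) :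
    Integrable f (volume.restrict (halfSpace n)) :=
  integ_of_bdd (hf.aestronglyMeasurable (hs_meas n)) hK
    (by simpa using hK.exists_bound_of_continuousOn (hf.mono hKS)) h0

lemma integ_mul {n : ℕ} {b f : Pt n → ℝ} {K : Set (Pt n)} (hbm : Measurable b)
    (hb : ∀ K : Set (Pt n), IsCompact K → K ⊆ halfSpace n → ∃ M, ∀ p ∈ K, |b p| ≤ M)
    (hf : ContinuousOn f (halfSpace n)) (hK : IsCompact K) (hKS : K ⊆ halfSpace n)
    (h0 : ∀ p, p ∈ halfSpace n → p ∉ K → f p = 0) :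
    Integrable (fun p => b p * f p) (volume.restrict (halfSpace n)) := by
  refine integ_of_bdd (hbm.aestronglyMeasurable.mul (hf.aestronglyMeasurable (hs_meas n))) hK
    ?_ (fun p hp hpK => by simp [h0 p hp hpK])
  obtain ⟨M1, h1⟩ := hb K hK hKS
  obtain ⟨M2, h2⟩ := hK.exists_bound_of_continuousOn (hf.mono hKS)
  refine ⟨M1 * M2, fun p hp => ?_⟩
  rw [abs_mul]
  have := h1 p hp
  exact mul_le_mul this (h2 p hp) (abs_nonneg _) ((abs_nonneg _).trans this)

lemma contOn_fderiv {n : ℕ} {u : Pt n → ℝ} (hu : ContDiffOn ℝ 1 u (halfSpace n)) (v : Pt n) :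
    ContinuousOn (fun p => fderiv ℝ u p v) (halfSpace n) :=
  (hu.continuousOn_fderiv_of_isOpen (hs_open n) le_rfl).clm_apply continuousOn_const

lemma fderiv_off {n : ℕ} {φ : Pt n → ℝ} {p : Pt n} (h : p ∉ tsupport φ) : fderiv ℝ φ p = 0 := by
  by_contra h'
  exact h (support_fderiv_subset ℝ h')

open Convolution in
lemma exists_smooth_approx {n : ℕ} {φ : Pt n → ℝ} (hφ : ContDiff ℝ 1 φ)
    (hc : HasCompactSupport φ) (hnn : ∀ p, 0 ≤ φ p) {δ ε : ℝ} (hδ : 0 < δ) (hε : 0 < ε) :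
    ∃ ψ : Pt n → ℝ, ContDiff ℝ (⊤ : ℕ∞) ψ ∧ (∀ p, 0 ≤ ψ p) ∧
      Function.support ψ ⊆ Metric.cthickening δ (tsupport φ) ∧
      (∀ p, |ψ p - φ p| ≤ ε) ∧ (∀ p, ‖fderiv ℝ ψ p - fderiv ℝ φ p‖ ≤ ε) := by
  have := haar_vol n
  have hu1 := hc.uniformContinuous_of_continuous hφ.continuous
  have hu2 := (hc.fderiv ℝ).uniformContinuous_of_continuous (hφ.continuous_fderiv one_ne_zero)
  obtain ⟨d1, hd1, h1⟩ := Metric.uniformContinuous_iff.1 hu1 ε hε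
  obtain ⟨d2, hd2, h2⟩ := Metric.uniformContinuous_iff.1 hu2 ε hε
  set d := min δ (min d1 d2) with hd
  have hdp : 0 < d := by positivity
  let f : ContDiffBump (0 : Pt n) := ⟨d / 2, d, by positivity, by linarith⟩
  have hli : LocallyIntegrable (f.normed volume) (volume : Measure (Pt n)) :=
    f.continuous_normed.locallyIntegrable
  let ψ : Pt n → ℝ := (f.normed volume) ⋆[ContinuousLinearMap.lsmul ℝ ℝ, volume] φ
  have hder : ∀ p, fderiv ℝ ψ p =
      ((f.normed volume) ⋆[ContinuousLinearMap.lsmul ℝ ℝ, volume] (fderiv ℝ φ)) p := by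
    intro p
    have h := (hc.hasFDerivAt_convolution_right (ContinuousLinearMap.lsmul ℝ ℝ) hli hφ p).fderiv
    rw [show fderiv ℝ ψ p = _ from h]
    unfold convolution
    congr 1
  refine ⟨ψ, ?_, ?_, ?_, ?_, ?_⟩
  · exact f.hasCompactSupport_normed.contDiff_convolution_left _ f.contDiff_normed
      hφ.continuous.locallyIntegrable
  · intro p
    apply integral_nonneg
    intro t
    exact mul_nonneg (f.nonneg_normed t) (hnn _)
  · intro p hp
    rw [Function.mem_support] at hp
    by_contra hcon
    apply hp
    have : ∀ t, (f.normed volume t) * φ (p - t) = 0 := by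
      intro t
      by_contra hne
      have h1' : t ∈ Function.support (f.normed volume) := fun h => hne (by simp [h])
      have h2' : p - t ∈ tsupport φ := subset_tsupport _ (fun h => hne (by simp [h]))
      rw [f.support_normed_eq] at h1'
      apply hcon
      refine Metric.mem_cthickening_of_dist_le p (p - t) δ _ h2' ?_
      have : ‖t‖ < d := by simpa using h1'
      rw [dist_eq_norm]; simp only [sub_sub_cancel]
      exact this.le.trans (min_le_left _ _)
    change ∫ t, (f.normed volume t) * φ (p - t) = 0
    simp [this]
  · intro p
    rw [← Real.dist_eq]
    refine f.dist_normed_convolution_le hφ.continuous.aestronglyMeasurable fun x hx => (h1 ?_).le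
    exact lt_of_lt_of_le hx ((min_le_right _ _).trans (min_le_left _ _))
  · intro p
    rw [← dist_eq_norm, hder]
    refine f.dist_normed_convolution_le
      (hφ.continuous_fderiv one_ne_zero).aestronglyMeasurable fun x hx => (h2 ?_).le
    exact lt_of_lt_of_le hx ((min_le_right _ _).trans (min_le_right _ _))

/-- The weak inequality `U_t ≥ LU + M U^q` tested against `C¹` functions. -/
def WkC1 {n : ℕ} (a : Fin n → Fin n → Pt n → ℝ) (q M : ℝ) (U : Pt n → ℝ) : Prop :=
  ∀ φ : Pt n → ℝ, ContDiff ℝ 1 φ → HasCompactSupport φ →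
    tsupport φ ⊆ halfSpace n → (∀ p, 0 ≤ φ p) →
    0 ≤ ∫ p in halfSpace n,
        (pdT U p * φ p + ∑ i, ∑ j, a i j p * pdX φ i p * pdX U j p
          - M * U p ^ q * φ p)

lemma pdX_cont {n : ℕ} {φ : Pt n → ℝ} (hφ : ContDiff ℝ 1 φ) (i : Fin n) :
    Continuous (pdX φ i) :=
  (hφ.continuous_fderiv one_ne_zero).clm_apply continuous_const

lemma integ_F {n : ℕ} {q M : ℝ} (hq : 0 ≤ q) {a : Fin n → Fin n → Pt n → ℝ}
    (ha_meas : ∀ i j, Measurable (a i j))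
    (ha_locbdd : ∀ i j, ∀ K : Set (Pt n), IsCompact K → K ⊆ halfSpace n →
      ∃ M, ∀ p ∈ K, |a i j p| ≤ M)
    {u : Pt n → ℝ} (hu : ContDiffOn ℝ 1 u (halfSpace n))
    {φ : Pt n → ℝ} (hφ : ContDiff ℝ 1 φ) (hc : HasCompactSupport φ)
    (hs : tsupport φ ⊆ halfSpace n) :
    Integrable (fun p => pdT u p * φ p + ∑ i, ∑ j, a i j p * pdX φ i p * pdX u j p
          - M * u p ^ q * φ p) (volume.restrict (halfSpace n)) := by
  refine (Integrable.add ?_ ?_).sub ?_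
  · refine integ_cont ((contOn_fderiv hu _).mul hφ.continuous.continuousOn) hc hs ?_
    intro p _ hp
    simp [image_eq_zero_of_notMem_tsupport hp]
  · refine integrable_finsetSum _ fun i _ => integrable_finsetSum _ fun j _ => ?_
    simp_rw [mul_assoc]
    refine integ_mul (ha_meas i j) (ha_locbdd i j)
      ((pdX_cont hφ i).continuousOn.mul (contOn_fderiv hu _)) hc hs ?_
    intro p _ hp
    simp [pdX, fderiv_off hp]
  · refine integ_cont ((continuousOn_const.mul
      (hu.continuousOn.rpow_const fun _ _ => Or.inr hq)).mul hφ.continuous.continuousOn) hc hs ?_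
    intro p _ hp
    simp [image_eq_zero_of_notMem_tsupport hp]

lemma weak_C1 {n : ℕ} {q : ℝ} (hq1 : 1 < q) {a : Fin n → Fin n → Pt n → ℝ}
    (ha_meas : ∀ i j, Measurable (a i j))
    (ha_locbdd : ∀ i j, ∀ K : Set (Pt n), IsCompact K → K ⊆ halfSpace n →
      ∃ M, ∀ p ∈ K, |a i j p| ≤ M)
    {u : Pt n → ℝ} (hu : ContDiffOn ℝ 1 u (halfSpace n))
    (hsupersol : WeakSuperSol a q u)
    (hu_nonneg : ∀ p, 0 ≤ p.1 → 0 ≤ u p) : WkC1 a q 1 u := by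
  intro φ hφ hc hs hnn
  obtain ⟨δ, hδ, hδS⟩ := (show IsCompact (tsupport φ) from hc).exists_cthickening_subset_open
    (hs_open n) hs
  set K := Metric.cthickening δ (tsupport φ) with hKdef
  have hK : IsCompact K := IsCompact.cthickening hc
  have hKS : K ⊆ halfSpace n := hδS
  let G : Pt n → ℝ := K.indicator (fun p => |pdT u p| + ∑ i, ∑ j, |a i j p| * |pdX u j p| + |u p ^ q|)
  have hpx : ∀ i, ContinuousOn (pdX u i) (halfSpace n) := fun i => contOn_fderiv hu _
  have hpt : ContinuousOn (pdT u) (halfSpace n) := contOn_fderiv hu _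
  have huq : ContinuousOn (fun p => u p ^ q) (halfSpace n) :=
    hu.continuousOn.rpow_const fun _ _ => Or.inr (by linarith)
  have hG : Integrable G (volume.restrict (halfSpace n)) := by
    refine integ_of_bdd ?_ hK ?_ ?_
    · refine AEStronglyMeasurable.indicator ?_ hK.measurableSet
      refine ((hpt.abs.aestronglyMeasurable (hs_meas n)).add ?_).add
        (huq.abs.aestronglyMeasurable (hs_meas n))
      refine Finset.aestronglyMeasurable_fun_sum _ fun i _ =>
        Finset.aestronglyMeasurable_fun_sum _ fun j _ => ?_
      exact (ha_meas i j).abs.aestronglyMeasurable.mul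
        ((hpx j).abs.aestronglyMeasurable (hs_meas n))
    · obtain ⟨M1, h1⟩ := hK.exists_bound_of_continuousOn (hpt.mono hKS)
      obtain ⟨M3, h3⟩ := hK.exists_bound_of_continuousOn (huq.mono hKS)
      choose M2 h2 using fun j => hK.exists_bound_of_continuousOn ((hpx j).mono hKS)
      choose Ma h4 using fun i j => ha_locbdd i j K hK hKS
      refine ⟨M1 + ∑ i, ∑ j, Ma i j * M2 j + M3, fun p hp => ?_⟩
      simp only [G, Set.indicator_of_mem hp]
      rw [abs_of_nonneg (by positivity)]
      gcongr with i _ j _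
      · exact h1 p hp
      · exact (abs_nonneg _).trans (h4 i j p hp)
      · exact h4 i j p hp
      · exact h2 j p hp
      · exact h3 p hp
    · intro p _ hp; simp [G, hp]
  set I := ∫ p in halfSpace n, G p with hI
  have hI0 : 0 ≤ I := by
    refine integral_nonneg fun p => ?_
    exact Set.indicator_nonneg (fun p _ => by positivity) p
  -- main estimate
  have key : ∀ ε > 0, 0 ≤ (∫ p in halfSpace n,
        (pdT u p * φ p + ∑ i, ∑ j, a i j p * pdX φ i p * pdX u j p
          - 1 * u p ^ q * φ p)) + ε * I := by
    intro ε hε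
    obtain ⟨ψ, hψ, hψn, hψs, hψ1, hψ2⟩ := exists_smooth_approx hφ hc hnn hδ hε
    have hψt : tsupport ψ ⊆ K := closure_minimal hψs hK.isClosed
    have hψc : HasCompactSupport ψ := hK.of_isClosed_subset (isClosed_tsupport _) hψt
    have h := hsupersol ψ hψ hψc (hψt.trans hKS) hψn
    have hFint := integ_F (q := q) (M := 1) (by linarith) ha_meas ha_locbdd hu hφ hc hs
    rw [← integral_const_mul, ← integral_add hFint (hG.const_mul ε)]
    refine h.trans ?_
    have e : ∫ p in halfSpace n, (pdT u p * ψ p + ∑ i, ∑ j, a i j p * pdX ψ i p * pdX u j p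
          - oddPow q (u p) * ψ p) = ∫ p in halfSpace n, (pdT u p * ψ p +
          ∑ i, ∑ j, a i j p * pdX ψ i p * pdX u j p - 1 * u p ^ q * ψ p) := by
      refine setIntegral_congr_fun (hs_meas n) fun p hp => ?_
      have h0 : 0 ≤ u p := hu_nonneg p (le_of_lt hp)
      have : oddPow q (u p) = u p ^ q := by
        unfold oddPow
        rw [abs_of_nonneg h0]
        rcases h0.eq_or_lt with h | h
        · rw [← h, mul_zero, Real.zero_rpow (by linarith)]
        · rw [Real.rpow_sub_one h.ne']; field_simp
      simp only [this, one_mul]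
    rw [e]
    refine integral_mono_ae (integ_F (by linarith) ha_meas ha_locbdd hu
      (hψ.of_le (by exact_mod_cast le_top)) hψc (hψt.trans hKS))
      (hFint.add (hG.const_mul ε)) (Filter.Eventually.of_forall fun p => ?_)
    beta_reduce
    by_cases hp : p ∈ K
    · simp only [G, Set.indicator_of_mem hp]
      have t1 : pdT u p * ψ p ≤ pdT u p * φ p + ε * |pdT u p| := by
        have : pdT u p * (ψ p - φ p) ≤ |pdT u p| * ε := by
          refine (le_abs_self _).trans ?_
          rw [abs_mul]; gcongr; exact hψ1 p
        linarith
      have t3 : - (1 * u p ^ q * ψ p) ≤ - (1 * u p ^ q * φ p) + ε * |u p ^ q| := by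
        have : - (u p ^ q * (ψ p - φ p)) ≤ |u p ^ q| * ε := by
          refine (neg_le_abs _).trans ?_
          rw [abs_mul]; gcongr; exact hψ1 p
        linarith
      have t2 : ∑ i, ∑ j, a i j p * pdX ψ i p * pdX u j p ≤
          ∑ i, ∑ j, a i j p * pdX φ i p * pdX u j p +
            ε * ∑ i, ∑ j, |a i j p| * |pdX u j p| := by
        simp_rw [Finset.mul_sum, ← Finset.sum_add_distrib]
        refine Finset.sum_le_sum fun i _ => Finset.sum_le_sum fun j _ => ?_
        have hd : |pdX ψ i p - pdX φ i p| ≤ ε := by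
          have h1 := (fderiv ℝ ψ p - fderiv ℝ φ p).le_of_opNorm_le (hψ2 p)
            (0, EuclideanSpace.single i 1)
          have h2 : ‖((0, EuclideanSpace.single i 1) : Pt n)‖ = 1 := by
            simp [Prod.norm_def]
          rw [h2, mul_one] at h1
          exact h1
        have : a i j p * (pdX ψ i p - pdX φ i p) * pdX u j p ≤ |a i j p| * ε * |pdX u j p| := by
          refine (le_abs_self _).trans ?_
          rw [abs_mul, abs_mul]; gcongr
        linarith
      linarith
    · have h1 : ψ p = 0 := image_eq_zero_of_notMem_tsupport (fun h => hp (hψt h))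
      have hφK : p ∉ tsupport φ := fun h => hp (Metric.self_subset_cthickening _ h)
      have h2 : φ p = 0 := image_eq_zero_of_notMem_tsupport hφK
      simp [G, hp, h1, h2, pdX, fderiv_off hφK, fderiv_off (fun h => hp (hψt h))]
  by_contra hneg
  push Not at hneg
  set Y := (∫ p in halfSpace n,
        (pdT u p * φ p + ∑ i, ∑ j, a i j p * pdX φ i p * pdX u j p
          - 1 * u p ^ q * φ p))
  have := key (-Y / (2 * (I + 1))) (by apply div_pos <;> linarith)
  have h2 : -Y / (2 * (I + 1)) * I ≤ -Y / 2 := by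
    rw [div_mul_eq_mul_div, div_le_div_iff₀ (by linarith) (by norm_num)]
    nlinarith
  linarith

/-! ### The two energy estimates -/

/-- Test functions `(U+κ)^r ζ^{k+2}`. -/
def tst {n : ℕ} (U ζ : Pt n → ℝ) (κ r : ℝ) (k : ℕ) : Pt n → ℝ :=
  fun p => (U p + κ) ^ r * ζ p ^ (k + 2)

lemma tst_tsupport {n : ℕ} (U ζ : Pt n → ℝ) (κ r : ℝ) (k : ℕ) :
    tsupport (tst U ζ κ r k) ⊆ tsupport ζ := by
  refine closure_mono fun p hp => ?_
  rw [Function.mem_support] at hp ⊢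
  intro h
  exact hp (by simp [tst, h])

lemma tst_hasFDerivAt {n : ℕ} {U ζ : Pt n → ℝ} {κ : ℝ} (r : ℝ) (k : ℕ)
    (hU : ContDiffOn ℝ 1 U (halfSpace n)) (hU0 : ∀ p ∈ halfSpace n, 0 ≤ U p) (hκ : 0 < κ)
    (hζ : ContDiff ℝ (⊤ : ℕ∞) ζ) {p : Pt n} (hp : p ∈ halfSpace n) (v : Pt n) :
    fderiv ℝ (tst U ζ κ r k) p v = r * (U p + κ) ^ (r - 1) * ζ p ^ (k + 2) * fderiv ℝ U p v
      + (k + 2) * ((U p + κ) ^ r * ζ p ^ (k + 1) * fderiv ℝ ζ p v) := by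
  have h1 : HasFDerivAt U (fderiv ℝ U p) p :=
    ((hU.contDiffAt ((hs_open n).mem_nhds hp)).differentiableAt one_ne_zero).hasFDerivAt
  have h2 : HasFDerivAt ζ (fderiv ℝ ζ p) p :=
    ((hζ.differentiable (by simp)) p).hasFDerivAt
  have hW : 0 < U p + κ := add_pos_of_nonneg_of_pos (hU0 p hp) hκ
  have h3 := (h1.add_const κ).rpow_const (p := r) (Or.inl hW.ne')
  have h4 := h2.pow (k + 2)
  have h5 := (h3.mul h4).fderiv
  rw [show fderiv ℝ (tst U ζ κ r k) p = _ from h5]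
  simp
  ring

lemma tst_contDiff {n : ℕ} {U ζ : Pt n → ℝ} {κ : ℝ} (r : ℝ) (k : ℕ)
    (hU : ContDiffOn ℝ 1 U (halfSpace n)) (hU0 : ∀ p ∈ halfSpace n, 0 ≤ U p) (hκ : 0 < κ)
    (hζ : ContDiff ℝ (⊤ : ℕ∞) ζ) (hs : tsupport ζ ⊆ halfSpace n) :
    ContDiff ℝ 1 (tst U ζ κ r k) := by
  refine contDiff_iff_contDiffAt.2 fun p => ?_
  by_cases hp : p ∈ tsupport (tst U ζ κ r k)
  swap
  · exact (contDiffAt_const (c := (0 : ℝ))).congr_of_eventuallyEq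
      (notMem_tsupport_iff_eventuallyEq.1 hp)
  have hp' : p ∈ halfSpace n := hs (tst_tsupport _ _ _ _ _ hp)
  have hW : 0 < U p + κ := add_pos_of_nonneg_of_pos (hU0 p hp') hκ
  have h1 : ContDiffAt ℝ 1 U p := hU.contDiffAt ((hs_open n).mem_nhds hp')
  have h2 : ContDiffAt ℝ 1 ζ p := (hζ.of_le (by exact_mod_cast le_top)).contDiffAt
  exact ((h1.add contDiffAt_const).rpow_const_of_ne hW.ne').mul (h2.pow _)

lemma integral_pdT_zero {n : ℕ} {f : Pt n → ℝ} (hf : ContDiff ℝ 1 f) (hc : HasCompactSupport f)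
    (hs : tsupport f ⊆ halfSpace n) :
    Integrable (pdT f) (volume.restrict (halfSpace n)) ∧ ∫ p in halfSpace n, pdT f p = 0 := by
  have := haar_vol n
  have hcd : HasCompactSupport (fun p => pdT f p) :=
    (hc.fderiv ℝ).comp_left (g := fun L : Pt n →L[ℝ] ℝ => L (1, 0)) (by simp)
  have hi : Integrable (fun p => pdT f p) volume :=
    ((hf.continuous_fderiv one_ne_zero).clm_apply continuous_const).integrable_of_hasCompactSupport
      hcd
  refine ⟨hi.restrict, ?_⟩
  rw [setIntegral_eq_integral_of_forall_compl_eq_zero]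
  · have h := integral_mul_fderiv_eq_neg_fderiv_mul_of_integrable (μ := (volume : Measure (Pt n)))
      (f := fun _ : Pt n => (1 : ℝ)) (g := f) (v := (1, 0)) (by simp) (by simpa [pdT] using hi)
      (by simpa using hf.continuous.integrable_of_hasCompactSupport hc)
      (fun x _ => by fun_prop) (fun x _ => hf.differentiable one_ne_zero x)
    simpa [pdT] using h
  · intro p hp
    simp [pdT, fderiv_off (fun h => hp (hs h))]

/-- The quadratic form of the coefficients. -/
def Qf {n : ℕ} (a : Fin n → Fin n → Pt n → ℝ) (p : Pt n) (x y : Fin n → ℝ) : ℝ :=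
  ∑ i, ∑ j, a i j p * x i * y j

lemma Qf_lin {n : ℕ} (a : Fin n → Fin n → Pt n → ℝ) (p : Pt n) (x z y : Fin n → ℝ) (s t : ℝ) :
    Qf a p (fun i => s * x i + t * z i) y = s * Qf a p x y + t * Qf a p z y := by
  unfold Qf
  simp_rw [Finset.mul_sum, ← Finset.sum_add_distrib]
  refine Finset.sum_congr rfl fun i _ => Finset.sum_congr rfl fun j _ => by ring

lemma Qf_cs {n : ℕ} {a : Fin n → Fin n → Pt n → ℝ} {p : Pt n}
    (hsym : ∀ i j, a i j p = a j i p) (hpos : ∀ x : Fin n → ℝ, 0 ≤ Qf a p x x)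
    (ξ η : Fin n → ℝ) (x y : ℝ) :
    2 * x * y * Qf a p η ξ ≤ x ^ 2 * Qf a p ξ ξ + y ^ 2 * Qf a p η η := by
  have hs : Qf a p ξ η = Qf a p η ξ := by
    unfold Qf
    rw [Finset.sum_comm]
    refine Finset.sum_congr rfl fun i _ => Finset.sum_congr rfl fun j _ => by
      rw [hsym j i]; ring
  have hsym' : ∀ v w, Qf a p v w = Qf a p w v := by
    intro v w
    unfold Qf
    rw [Finset.sum_comm]
    refine Finset.sum_congr rfl fun i _ => Finset.sum_congr rfl fun j _ => by
      rw [hsym j i]; ring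
  have h := hpos (fun i => x * ξ i + (-y) * η i)
  rw [Qf_lin, hsym' ξ, hsym' η, Qf_lin, Qf_lin, hs] at h
  nlinarith

/-- Standing a.e. facts about a cut-off function. -/
structure Cut {n : ℕ} (a : Fin n → Fin n → Pt n → ℝ) (K M : ℝ) (ζ : Pt n → ℝ)
    (T B : Set (Pt n)) : Prop where
  smooth : ContDiff ℝ (⊤ : ℕ∞) ζ
  cpt : HasCompactSupport ζ
  supp : tsupport ζ ⊆ halfSpace n
  nonneg : ∀ p, 0 ≤ ζ p
  le_one : ∀ p, ζ p ≤ 1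
  Tmeas : MeasurableSet T
  Bmeas : MeasurableSet B
  Bsub : B ⊆ halfSpace n
  Bfin : volume B < ⊤
  off : ∀ p ∈ halfSpace n, p ∉ B → ζ p = 0
  tbound : ∀ p ∈ halfSpace n, - pdT ζ p ≤ K * M * T.indicator (fun _ => 1) p
  xbound : ∀ᵐ p ∂(volume.restrict (halfSpace n)),
    Qf a p (fun i => pdX ζ i p) (fun i => pdX ζ i p) ≤ K * M * T.indicator (fun _ => 1) p

lemma ind_cases {n : ℕ} (T : Set (Pt n)) (p : Pt n) :
    T.indicator (fun _ => (1 : ℝ)) p = 0 ∨ T.indicator (fun _ => (1 : ℝ)) p = 1 := by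
  by_cases h : p ∈ T <;> simp [h]

lemma ind_integ {n : ℕ} {B : Set (Pt n)} (hB : MeasurableSet B) (hS : B ⊆ halfSpace n)
    (hf : volume B < ⊤) (c : ℝ) :
    Integrable (B.indicator (fun _ => c)) (volume.restrict (halfSpace n)) ∧
    ∫ p in halfSpace n, B.indicator (fun _ => c) p = c * volume.real B := by
  constructor
  · exact ((integrable_indicator_iff hB).2 (integrableOn_const hf.ne)).restrict
  · rw [integral_indicator_const _ hB]
    simp [Measure.real, Measure.restrict_apply hB, Set.inter_eq_left.2 hS, mul_comm]

/-- The energy density. -/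
def dens {n : ℕ} (a : Fin n → Fin n → Pt n → ℝ) (U ζ : Pt n → ℝ) (κ γ : ℝ) (k : ℕ) (p : Pt n) : ℝ :=
  (U p + κ) ^ (-γ - 1) * ζ p ^ (k + 2) * Qf a p (fun i => pdX U i p) (fun i => pdX U i p)

lemma dens_integ {n : ℕ} {a : Fin n → Fin n → Pt n → ℝ}
    (ha_meas : ∀ i j, Measurable (a i j))
    (ha_locbdd : ∀ i j, ∀ K : Set (Pt n), IsCompact K → K ⊆ halfSpace n →
      ∃ M, ∀ p ∈ K, |a i j p| ≤ M)
    {U ζ : Pt n → ℝ} (hU : ContDiffOn ℝ 1 U (halfSpace n))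
    (hU0 : ∀ p ∈ halfSpace n, 0 ≤ U p) {κ : ℝ} (hκ : 0 < κ) (hζ : ContDiff ℝ (⊤ : ℕ∞) ζ)
    (hc : HasCompactSupport ζ) (hs : tsupport ζ ⊆ halfSpace n) (γ : ℝ) (k : ℕ) :
    Integrable (dens a U ζ κ γ k) (volume.restrict (halfSpace n)) := by
  have e : dens a U ζ κ γ k = fun p => ∑ i, ∑ j, a i j p *
      ((U p + κ) ^ (-γ - 1) * ζ p ^ (k + 2) * pdX U i p * pdX U j p) := by
    funext p
    simp only [dens, Qf, Finset.mul_sum]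
    refine Finset.sum_congr rfl fun i _ => Finset.sum_congr rfl fun j _ => by ring
  rw [e]
  refine integrable_finsetSum _ fun i _ => integrable_finsetSum _ fun j _ => ?_
  refine integ_mul (ha_meas i j) (ha_locbdd i j) ?_ hc hs ?_
  · refine ContinuousOn.mul (ContinuousOn.mul (ContinuousOn.mul ?_ ?_) (contOn_fderiv hU _))
      (contOn_fderiv hU _)
    · refine ContinuousOn.rpow_const (hU.continuousOn.add continuousOn_const) fun p hp => Or.inl ?_
      exact (add_pos_of_nonneg_of_pos (hU0 p hp) hκ).ne'
    · exact (hζ.continuous.pow _).continuousOn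
  · intro p _ hp
    simp [image_eq_zero_of_notMem_tsupport hp]

lemma energy1 {n : ℕ} {a : Fin n → Fin n → Pt n → ℝ} {q γ K M C κ : ℝ} {k : ℕ}
    (hq : 1 < q) (hγ : 0 < γ) (hγ1 : γ < 1) (hK : 0 ≤ K) (hM : 0 < M) (hC : 0 ≤ C)
    (hκ : 0 < κ) (hκ1 : κ ≤ 1)
    (ha_meas : ∀ i j, Measurable (a i j))
    (ha_locbdd : ∀ i j, ∀ K : Set (Pt n), IsCompact K → K ⊆ halfSpace n →
      ∃ M, ∀ p ∈ K, |a i j p| ≤ M)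
    (hCS : ∀ᵐ p ∂(volume.restrict (halfSpace n)), ∀ (ξ η : Fin n → ℝ) (x y : ℝ),
      2 * x * y * Qf a p η ξ ≤ x ^ 2 * Qf a p ξ ξ + y ^ 2 * Qf a p η η)
    {U ζ : Pt n → ℝ} {T B : Set (Pt n)} (hU : ContDiffOn ℝ 1 U (halfSpace n))
    (hU0 : ∀ p ∈ halfSpace n, 0 ≤ U p) (hw : WkC1 a q M U) (hζ : Cut a K M ζ T B)
    (hY : ∀ X ζ : ℝ, 0 ≤ X → 0 ≤ ζ → ζ ≤ 1 →
      ((k + 2) / (1 - γ) * K + (k + 2) ^ 2 / (2 * γ) * K) * (X ^ (1 - γ) * ζ ^ k)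
        ≤ 2 ^ (-q) * (X ^ (q - γ) * ζ ^ (k + 2)) + C) :
    (γ / 2) * ∫ p in halfSpace n, dens a U ζ κ γ k p ≤ M * (C + 1) * volume.real B := by
  have h1γ : 0 < 1 - γ := by linarith
  have hφ := tst_contDiff (-γ) k hU hU0 hκ hζ.smooth hζ.supp
  have hφs := (tst_tsupport U ζ κ (-γ) k)
  have hφc : HasCompactSupport (tst U ζ κ (-γ) k) :=
    hζ.cpt.of_isClosed_subset (isClosed_tsupport _) hφs
  have hΨ := tst_contDiff (1 - γ) k hU hU0 hκ hζ.smooth hζ.supp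
  have hΨs := (tst_tsupport U ζ κ (1 - γ) k)
  have hΨc : HasCompactSupport (tst U ζ κ (1 - γ) k) :=
    hζ.cpt.of_isClosed_subset (isClosed_tsupport _) hΨs
  obtain ⟨i1, z1⟩ := integral_pdT_zero hΨ hΨc (hΨs.trans hζ.supp)
  have i2 := dens_integ ha_meas ha_locbdd hU hU0 hκ hζ.smooth hζ.cpt hζ.supp γ k
  obtain ⟨i3, z3⟩ := ind_integ hζ.Bmeas hζ.Bsub hζ.Bfin (M * (C + 1))
  have h := hw _ hφ hφc (hφs.trans hζ.supp) (by
    intro p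
    by_cases hp : p ∈ halfSpace n
    · have : 0 < U p + κ := add_pos_of_nonneg_of_pos (hU0 p hp) hκ
      have := hζ.nonneg p
      unfold tst; positivity
    · have : ζ p = 0 := image_eq_zero_of_notMem_tsupport fun h => hp (hζ.supp h)
      simp [tst, this])
  have hmono : ∫ p in halfSpace n, (pdT U p * tst U ζ κ (-γ) k p +
      ∑ i, ∑ j, a i j p * pdX (tst U ζ κ (-γ) k) i p * pdX U j p
          - M * U p ^ q * tst U ζ κ (-γ) k p) ≤
      ∫ p in halfSpace n, (((1 / (1 - γ)) * pdT (tst U ζ κ (1 - γ) k) p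
        - (γ / 2) * dens a U ζ κ γ k p) + B.indicator (fun _ => M * (C + 1)) p) := by
    refine integral_mono_ae (integ_F (by linarith) ha_meas ha_locbdd hU hφ hφc
      (hφs.trans hζ.supp)) (((i1.const_mul _).sub (i2.const_mul _)).add i3) ?_
    filter_upwards [ae_restrict_mem (hs_meas n), hCS, hζ.xbound] with p hp hcs hxb
    have e1 : ∑ i, ∑ j, a i j p * pdX (tst U ζ κ (-γ) k) i p * pdX U j p =
        -γ * ((U p + κ) ^ (-γ - 1) * ζ p ^ (k + 2) *
          Qf a p (fun i => pdX U i p) (fun i => pdX U i p)) +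
        (k + 2) * ((U p + κ) ^ (-γ) * ζ p ^ (k + 1) *
          Qf a p (fun i => pdX ζ i p) (fun i => pdX U i p)) := by
      simp only [Qf, Finset.mul_sum, ← Finset.sum_add_distrib]
      refine Finset.sum_congr rfl fun i _ => Finset.sum_congr rfl fun j _ => ?_
      rw [show pdX (tst U ζ κ (-γ) k) i p = _ from
        tst_hasFDerivAt (-γ) k hU hU0 hκ hζ.smooth hp (0, EuclideanSpace.single i 1)]
      simp only [pdX]
      ring
    have e2 : pdT (tst U ζ κ (1 - γ) k) p = (1 - γ) * (pdT U p * tst U ζ κ (-γ) k p) +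
        (k + 2) * ((U p + κ) ^ (1 - γ) * ζ p ^ (k + 1) * pdT ζ p) := by
      rw [show pdT (tst U ζ κ (1 - γ) k) p = _ from
        tst_hasFDerivAt (1 - γ) k hU hU0 hκ hζ.smooth hp (1, 0)]
      rw [show 1 - γ - 1 = -γ by ring]
      simp only [pdT, tst]
      ring
    have e2' : pdT U p * tst U ζ κ (-γ) k p = (1 / (1 - γ)) * pdT (tst U ζ κ (1 - γ) k) p
        - ((k + 2) / (1 - γ)) * ((U p + κ) ^ (1 - γ) * ζ p ^ (k + 1) * pdT ζ p) := by
      rw [e2]; field_simp; ring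
    rw [e1, e2']
    by_cases hB : p ∈ B
    · have hind : K * M * T.indicator (fun _ => 1) p ≤ K * M := by
        rcases ind_cases T p with h | h <;> rw [h] <;> simp
        positivity
      have key := sc_E1 hq hγ hγ1 hK hM hκ hκ1 (hU0 p hp) (hζ.nonneg p) (hζ.le_one p)
        ((hζ.tbound p hp).trans hind) (hxb.trans hind)
        (hcs (fun i => pdX U i p) (fun i => pdX ζ i p)) hY
      simp only [dens, tst, Set.indicator_of_mem hB]
      linarith
    · have h0 := hζ.off p hp hB
      simp [dens, tst, hB, h0]
  have i6 : Integrable (fun p => (1 / (1 - γ)) * pdT (tst U ζ κ (1 - γ) k) p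
        - (γ / 2) * dens a U ζ κ γ k p) (volume.restrict (halfSpace n)) :=
    (i1.const_mul _).sub (i2.const_mul _)
  rw [integral_add i6 i3,
    integral_sub (i1.const_mul _) (i2.const_mul _), integral_const_mul, integral_const_mul,
    z1, z3] at hmono
  linarith

lemma energy2 {n : ℕ} {a : Fin n → Fin n → Pt n → ℝ} {q γ K M C0 C lam μ κ : ℝ} {k : ℕ}
    (hq : 1 < q) (hγ : 0 < γ) (hγ1 : γ < 1) (hK : 0 ≤ K) (hM : 0 < M) (hC0 : 0 ≤ C0)
    (hκ : 0 < κ) (hκ1 : κ ≤ 1) (hlam : 0 < lam) (hμ : 0 < μ) (hC : 0 ≤ C)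
    (hκC : μ * 2 ^ q * κ ^ q ≤ C)
    (ha_meas : ∀ i j, Measurable (a i j))
    (ha_locbdd : ∀ i j, ∀ K : Set (Pt n), IsCompact K → K ⊆ halfSpace n →
      ∃ M, ∀ p ∈ K, |a i j p| ≤ M)
    (hCS : ∀ᵐ p ∂(volume.restrict (halfSpace n)), ∀ (ξ η : Fin n → ℝ) (x y : ℝ),
      2 * x * y * Qf a p η ξ ≤ x ^ 2 * Qf a p ξ ξ + y ^ 2 * Qf a p η η)
    {U ζ : Pt n → ℝ} {T B : Set (Pt n)} (hU : ContDiffOn ℝ 1 U (halfSpace n))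
    (hU0 : ∀ p ∈ halfSpace n, 0 ≤ U p) (hw : WkC1 a q M U) (hζ : Cut a K M ζ T B)
    (hY : ∀ X ζ : ℝ, 0 ≤ X → 0 ≤ ζ → ζ ≤ 1 →
      ((k + 2) / (1 - γ) * K + (k + 2) ^ 2 / (2 * γ) * K) * (X ^ (1 - γ) * ζ ^ k)
        ≤ 2 ^ (-q) * (X ^ (q - γ) * ζ ^ (k + 2)) + C0)
    (hY1 : ∀ X ζ : ℝ, 0 ≤ X → 0 ≤ ζ → ζ ≤ 1 →
      ((k + 2) * K) * (X ^ (1 : ℝ) * ζ ^ k) ≤ μ / 2 * (X ^ q * ζ ^ (k + 2)) + C / 2)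
    (hY2 : ∀ X ζ : ℝ, 0 ≤ X → 0 ≤ ζ → ζ ≤ 1 →
      ((k + 2) ^ 2 / (4 * lam) * K) * (X ^ (γ + 1) * ζ ^ k)
        ≤ μ / 2 * (X ^ q * ζ ^ (k + 2)) + C / 2) :
    ∫ p in halfSpace n, U p ^ q * ζ p ^ (k + 2) ≤
      μ * 2 ^ q * (∫ p in halfSpace n, U p ^ q * ζ p ^ (k + 2) * T.indicator (fun _ => 1) p)
      + (lam * (2 / γ * (C0 + 1)) + 2 * C) * volume.real B := by
  have hE := energy1 hq hγ hγ1 hK hM hC0 hκ hκ1 ha_meas ha_locbdd hCS hU hU0 hw hζ hY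
  have hφ := tst_contDiff 0 k hU hU0 hκ hζ.smooth hζ.supp
  have hφs := (tst_tsupport U ζ κ 0 k)
  have hφc : HasCompactSupport (tst U ζ κ 0 k) :=
    hζ.cpt.of_isClosed_subset (isClosed_tsupport _) hφs
  have hΨ := tst_contDiff 1 k hU hU0 hκ hζ.smooth hζ.supp
  have hΨs := (tst_tsupport U ζ κ 1 k)
  have hΨc : HasCompactSupport (tst U ζ κ 1 k) :=
    hζ.cpt.of_isClosed_subset (isClosed_tsupport _) hΨs
  obtain ⟨i1, z1⟩ := integral_pdT_zero hΨ hΨc (hΨs.trans hζ.supp)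
  have i2 := dens_integ ha_meas ha_locbdd hU hU0 hκ hζ.smooth hζ.cpt hζ.supp γ k
  obtain ⟨i3, z3⟩ := ind_integ hζ.Bmeas hζ.Bsub hζ.Bfin (M * (2 * C))
  have i4 : Integrable (fun p => U p ^ q * ζ p ^ (k + 2)) (volume.restrict (halfSpace n)) := by
    refine integ_cont ((hU.continuousOn.rpow_const fun _ _ => Or.inr (by linarith)).mul
      (hζ.smooth.continuous.pow _).continuousOn) hζ.cpt hζ.supp ?_
    intro p _ hp
    simp [image_eq_zero_of_notMem_tsupport hp]
  have i5 : Integrable (fun p => U p ^ q * ζ p ^ (k + 2) * T.indicator (fun _ => 1) p)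
      (volume.restrict (halfSpace n)) := by
    refine (i4.indicator hζ.Tmeas).congr (Filter.Eventually.of_forall fun p => ?_)
    by_cases h : p ∈ T <;> simp [h]
  have h := hw _ hφ hφc (hφs.trans hζ.supp) (by
    intro p
    have := hζ.nonneg p
    simp only [tst, Real.rpow_zero]; positivity)
  have hmono : ∫ p in halfSpace n, (pdT U p * tst U ζ κ 0 k p +
      ∑ i, ∑ j, a i j p * pdX (tst U ζ κ 0 k) i p * pdX U j p
          - M * U p ^ q * tst U ζ κ 0 k p) ≤
      ∫ p in halfSpace n, ((((pdT (tst U ζ κ 1 k) p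
        + lam * dens a U ζ κ γ k p) + M * (μ * 2 ^ q) *
          (U p ^ q * ζ p ^ (k + 2) * T.indicator (fun _ => 1) p))
          - M * (U p ^ q * ζ p ^ (k + 2))) + B.indicator (fun _ => M * (2 * C)) p) := by
    refine integral_mono_ae (integ_F (by linarith) ha_meas ha_locbdd hU hφ hφc
      (hφs.trans hζ.supp)) ((((i1.add (i2.const_mul _)).add (i5.const_mul _)).sub
        (i4.const_mul _)).add i3) ?_
    filter_upwards [ae_restrict_mem (hs_meas n), hCS, hζ.xbound] with p hp hcs hxb
    have e1 : ∑ i, ∑ j, a i j p * pdX (tst U ζ κ 0 k) i p * pdX U j p =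
        (k + 2) * (ζ p ^ (k + 1) * Qf a p (fun i => pdX ζ i p) (fun i => pdX U i p)) := by
      simp only [Qf, Finset.mul_sum]
      refine Finset.sum_congr rfl fun i _ => Finset.sum_congr rfl fun j _ => ?_
      rw [show pdX (tst U ζ κ 0 k) i p = _ from
        tst_hasFDerivAt 0 k hU hU0 hκ hζ.smooth hp (0, EuclideanSpace.single i 1)]
      simp only [pdX, Real.rpow_zero]
      ring
    have e2 : pdT (tst U ζ κ 1 k) p = pdT U p * ζ p ^ (k + 2) +
        (k + 2) * ((U p + κ) * ζ p ^ (k + 1) * pdT ζ p) := by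
      rw [show pdT (tst U ζ κ 1 k) p = _ from
        tst_hasFDerivAt 1 k hU hU0 hκ hζ.smooth hp (1, 0)]
      simp only [pdT, sub_self, Real.rpow_zero, Real.rpow_one]
      ring
    rw [e1, e2]
    by_cases hB : p ∈ B
    · have key := sc_E2 hq hM hlam hμ (ind_cases T p) hκ (hU0 p hp) (hζ.nonneg p) (hζ.le_one p)
        hC hκC hK (hζ.tbound p hp) hxb
        (hcs (fun i => pdX U i p) (fun i => pdX ζ i p)) hY1 hY2
      simp only [dens, tst, Set.indicator_of_mem hB, Real.rpow_zero]
      linarith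
    · have h0 := hζ.off p hp hB
      simp [dens, tst, hB, h0]
  have i6 : Integrable (fun p => pdT (tst U ζ κ 1 k) p + lam * dens a U ζ κ γ k p)
      (volume.restrict (halfSpace n)) := i1.add (i2.const_mul _)
  have i7 : Integrable (fun p => (pdT (tst U ζ κ 1 k) p + lam * dens a U ζ κ γ k p)
      + M * (μ * 2 ^ q) * (U p ^ q * ζ p ^ (k + 2) * T.indicator (fun _ => 1) p))
      (volume.restrict (halfSpace n)) := i6.add (i5.const_mul _)
  have i8 : Integrable (fun p => ((pdT (tst U ζ κ 1 k) p + lam * dens a U ζ κ γ k p)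
      + M * (μ * 2 ^ q) * (U p ^ q * ζ p ^ (k + 2) * T.indicator (fun _ => 1) p))
      - M * (U p ^ q * ζ p ^ (k + 2)))
      (volume.restrict (halfSpace n)) := i7.sub (i4.const_mul _)
  rw [integral_add i8 i3, integral_sub i7 (i4.const_mul _), integral_add i6 (i5.const_mul _),
    integral_add i1 (i2.const_mul _),
    integral_const_mul, integral_const_mul, integral_const_mul, z1, z3] at hmono
  set D := ∫ p in halfSpace n, dens a U ζ κ γ k p
  set I := ∫ p in halfSpace n, U p ^ q * ζ p ^ (k + 2)
  set J := ∫ p in halfSpace n, U p ^ q * ζ p ^ (k + 2) * T.indicator (fun _ => 1) p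
  have hD : D ≤ 2 / γ * (M * (C0 + 1) * volume.real B) := by
    rw [div_mul_eq_mul_div, le_div_iff₀ hγ]; linarith
  have hD' := mul_le_mul_of_nonneg_left hD hlam.le
  have : M * I ≤ M * (μ * 2 ^ q * J + (lam * (2 / γ * (C0 + 1)) + 2 * C) * volume.real B) := by
    calc M * I ≤ lam * D + M * (μ * 2 ^ q) * J + M * (2 * C) * volume.real B := by linarith
      _ ≤ lam * (2 / γ * (M * (C0 + 1) * volume.real B)) + M * (μ * 2 ^ q) * J
          + M * (2 * C) * volume.real B := by linarith
      _ = _ := by ring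
  exact le_of_mul_le_mul_left this hM

/-! ### Cut-off functions -/

lemma st_deriv_zero {x : ℝ} (hx : x ≤ 0 ∨ 1 ≤ x) : deriv Real.smoothTransition x = 0 := by
  rcases hx with hx | hx
  · refine IsLocalMin.deriv_eq_zero (Filter.Eventually.of_forall fun y => ?_)
    rw [Real.smoothTransition.zero_of_nonpos hx]
    exact Real.smoothTransition.nonneg y
  · refine IsLocalMax.deriv_eq_zero (Filter.Eventually.of_forall fun y => ?_)
    rw [Real.smoothTransition.one_of_one_le hx]
    exact Real.smoothTransition.le_one y

lemma st_smooth : ContDiff ℝ (⊤ : ℕ∞) Real.smoothTransition := Real.smoothTransition.contDiff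

lemma st_diff : Differentiable ℝ Real.smoothTransition := st_smooth.differentiable (by simp)

lemma st_deriv_bd : ∃ L : ℝ, 0 < L ∧ ∀ x, |deriv Real.smoothTransition x| ≤ L := by
  have hc : Continuous (deriv Real.smoothTransition) :=
    st_smooth.continuous_deriv (by simp)
  obtain ⟨L, hL⟩ := (isCompact_Icc (a := (0 : ℝ)) (b := 1)).exists_bound_of_continuousOn
    hc.continuousOn
  refine ⟨max L 1, by positivity, fun x => ?_⟩
  by_cases hx : x ∈ Set.Icc (0 : ℝ) 1
  · exact (hL x hx).trans (le_max_left _ _)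
  · rw [st_deriv_zero]
    · simp
    · by_contra h
      push Not at h
      exact hx ⟨h.1.le, h.2.le⟩

lemma st_deriv_nonneg (x : ℝ) : 0 ≤ deriv Real.smoothTransition x :=
  Real.smoothTransition.monotone.deriv_nonneg

/-- The time cut-off near `t = 0`. -/
def hcut {n : ℕ} (t0 : ℝ) (p : Pt n) : ℝ := Real.smoothTransition (2 * p.1 / t0 - 1)

/-- The full cut-off. -/
def zcut {n : ℕ} (t0 P R : ℝ) (p : Pt n) : ℝ :=
  hcut t0 p * Real.smoothTransition (2 - p.1 / P) *
    Real.smoothTransition (2 - 4 * ‖p.2‖ ^ 2 / R ^ 2)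

lemma zcut_fderiv {n : ℕ} (t0 P R : ℝ) (p v : Pt n) :
    fderiv ℝ (zcut t0 P R) p v =
      (deriv Real.smoothTransition (2 * p.1 / t0 - 1) * (2 * v.1 / t0)) *
        Real.smoothTransition (2 - p.1 / P) * Real.smoothTransition (2 - 4 * ‖p.2‖ ^ 2 / R ^ 2)
      - hcut t0 p * (deriv Real.smoothTransition (2 - p.1 / P) * (v.1 / P)) *
        Real.smoothTransition (2 - 4 * ‖p.2‖ ^ 2 / R ^ 2)
      - hcut t0 p * Real.smoothTransition (2 - p.1 / P) *
        (deriv Real.smoothTransition (2 - 4 * ‖p.2‖ ^ 2 / R ^ 2) *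
          (8 * inner ℝ p.2 v.2 / R ^ 2)) := by
  have hf : HasFDerivAt (fun p : Pt n => p.1) (ContinuousLinearMap.fst ℝ ℝ (Xn n)) p :=
    hasFDerivAt_fst
  have hs : HasFDerivAt (fun p : Pt n => p.2) (ContinuousLinearMap.snd ℝ ℝ (Xn n)) p :=
    hasFDerivAt_snd
  have h1 := (st_diff (2 * p.1 / t0 - 1)).hasDerivAt.comp_hasFDerivAt p
    (((hf.const_mul 2).mul_const t0⁻¹).sub_const 1)
  have h2 := (st_diff (2 - p.1 / P)).hasDerivAt.comp_hasFDerivAt p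
    ((hf.mul_const P⁻¹).const_sub 2)
  have h3 := (st_diff (2 - 4 * ‖p.2‖ ^ 2 / R ^ 2)).hasDerivAt.comp_hasFDerivAt p
    (((hs.norm_sq.const_mul 4).mul_const (R ^ 2)⁻¹).const_sub 2)
  have h := ((h1.mul h2).mul h3).fderiv
  rw [show fderiv ℝ (zcut t0 P R) p = _ from h]
  simp [hcut, div_eq_mul_inv]
  ring

lemma zcut_smooth {n : ℕ} (t0 P R : ℝ) : ContDiff ℝ (⊤ : ℕ∞) (zcut (n := n) t0 P R) := by
  unfold zcut hcut
  refine ContDiff.mul (ContDiff.mul (st_smooth.comp ?_) (st_smooth.comp ?_)) (st_smooth.comp ?_)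
  · exact ((contDiff_const.mul contDiff_fst).div_const _).sub contDiff_const
  · exact contDiff_const.sub (contDiff_fst.div_const _)
  · exact contDiff_const.sub ((contDiff_const.mul (contDiff_snd.norm_sq ℝ)).div_const _)

lemma Qf_smul {n : ℕ} (a : Fin n → Fin n → Pt n → ℝ) (p : Pt n) (x : Fin n → ℝ) (g : ℝ) :
    Qf a p (fun i => g * x i) (fun i => g * x i) = g ^ 2 * Qf a p x x := by
  unfold Qf
  simp_rw [Finset.mul_sum]
  refine Finset.sum_congr rfl fun i _ => Finset.sum_congr rfl fun j _ => by ring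

/-- transition region -/
def Tset (n : ℕ) (P R : ℝ) : Set (Pt n) := {p | ¬ (p.1 ≤ P ∧ ‖p.2‖ ≤ R / 2)}

/-- support box -/
def Bset (n : ℕ) (P R : ℝ) : Set (Pt n) := Set.Ioc 0 (2 * P) ×ˢ Metric.closedBall (0 : Xn n) R

lemma zcut_supp {n : ℕ} {t0 P R : ℝ} (ht0 : 0 < t0) (hP : 0 < P) (hR : 0 < R) {p : Pt n}
    (h : zcut t0 P R p ≠ 0) : p ∈ Set.Icc (t0 / 2) (2 * P) ×ˢ Metric.closedBall (0 : Xn n) R := by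
  unfold zcut hcut at h
  have h1 : 0 < 2 * p.1 / t0 - 1 := by
    by_contra hh
    exact h (by rw [Real.smoothTransition.zero_of_nonpos (not_lt.1 hh)]; simp)
  have h2 : 0 < 2 - p.1 / P := by
    by_contra hh
    exact h (by rw [Real.smoothTransition.zero_of_nonpos (not_lt.1 hh)]; simp)
  have h3 : 0 < 2 - 4 * ‖p.2‖ ^ 2 / R ^ 2 := by
    by_contra hh
    exact h (by rw [Real.smoothTransition.zero_of_nonpos (not_lt.1 hh)]; simp)
  have h1' : t0 < 2 * p.1 := by
    have : 1 < 2 * p.1 / t0 := by linarith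
    rwa [one_lt_div ht0] at this
  have h2' : p.1 < 2 * P := by
    have : p.1 / P < 2 := by linarith
    rwa [div_lt_iff₀ hP] at this
  have h3' : 4 * ‖p.2‖ ^ 2 < 2 * R ^ 2 := by
    have : 4 * ‖p.2‖ ^ 2 / R ^ 2 < 2 := by linarith
    rwa [div_lt_iff₀ (by positivity)] at this
  refine ⟨⟨by linarith, h2'.le⟩, ?_⟩
  rw [mem_closedBall_zero_iff]
  nlinarith [norm_nonneg p.2]

lemma zcut_cut {n : ℕ} {a : Fin n → Fin n → Pt n → ℝ} {A : Pt n → ℝ} {α c t0 R L K : ℝ}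
    (hA_nonneg : ∀ p, 0 ≤ A p)
    (hform : ∀ᵐ p ∂(volume.restrict (halfSpace n)), ∀ ξ : Xn n,
      0 ≤ ∑ i, ∑ j, a i j p * ξ i * ξ j ∧
      ∑ i, ∑ j, a i j p * ξ i * ξ j ≤ A p * ‖ξ‖ ^ 2)
    (hcond8 : Cond8 A α c) (ht0 : 0 < t0) (hR : 1 < R)
    (hL : ∀ x, |deriv Real.smoothTransition x| ≤ L) (hKL : L ≤ K) (hKc : 64 * c * L ^ 2 ≤ K) :
    Cut a K (R ^ (-α)) (zcut t0 (R ^ α) R) (Tset n (R ^ α) R) (Bset n (R ^ α) R) := by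
  have hR0 : 0 < R := by linarith
  have hP : 0 < R ^ α := by positivity
  have hL0 : 0 ≤ L := (abs_nonneg _).trans (hL 0)
  have hK0 : 0 ≤ K := hL0.trans hKL
  have hM : R ^ (-α) = (R ^ α)⁻¹ := Real.rpow_neg hR0.le _
  have hsub : tsupport (zcut (n := n) t0 (R ^ α) R) ⊆
      Set.Icc (t0 / 2) (2 * R ^ α) ×ˢ Metric.closedBall (0 : Xn n) R :=
    closure_minimal (fun p hp => zcut_supp ht0 hP hR0 hp)
      (isClosed_Icc.prod Metric.isClosed_closedBall)
  have n0 : ∀ x, 0 ≤ Real.smoothTransition x := Real.smoothTransition.nonneg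
  have n1 : ∀ x, Real.smoothTransition x ≤ 1 := Real.smoothTransition.le_one
  have d0 := st_deriv_nonneg
  have d1 : ∀ x, deriv Real.smoothTransition x ≤ L := fun x => (le_abs_self _).trans (hL x)
  have hTm : MeasurableSet (Tset n (R ^ α) R) := by
    refine MeasurableSet.compl (s := {p : Pt n | p.1 ≤ R ^ α ∧ ‖p.2‖ ≤ R / 2}) ?_
    exact (measurableSet_le measurable_fst measurable_const).inter
      (measurableSet_le measurable_snd.norm measurable_const)
  refine ⟨zcut_smooth _ _ _, ?_, ?_, ?_, ?_, hTm, ?_, ?_, ?_, ?_, ?_, ?_⟩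
  · exact (isCompact_Icc.prod (isCompact_closedBall _ _)).of_isClosed_subset
      (isClosed_tsupport _) hsub
  · intro p hp
    have := (hsub hp).1.1
    show 0 < p.1
    linarith
  · intro p
    exact mul_nonneg (mul_nonneg (n0 _) (n0 _)) (n0 _)
  · intro p
    exact mul_le_one₀ (mul_le_one₀ (n1 _) (n0 _) (n1 _)) (n0 _) (n1 _)
  · exact measurableSet_Ioc.prod Metric.isClosed_closedBall.measurableSet
  · intro p hp
    exact hp.1.1
  · have := haar_vol n
    refine lt_of_le_of_lt (measure_mono ?_)
      ((isCompact_Icc (a := (0 : ℝ)) (b := 2 * R ^ α)).prod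
        (isCompact_closedBall (0 : Xn n) R)).measure_lt_top
    exact Set.prod_mono Set.Ioc_subset_Icc_self le_rfl
  · intro p hp hB
    by_contra h
    have := zcut_supp ht0 hP hR0 h
    exact hB ⟨⟨hp, this.1.2⟩, this.2⟩
  · intro p hp
    rw [pdT, zcut_fderiv]
    have g1 : 0 ≤ (deriv Real.smoothTransition (2 * p.1 / t0 - 1) * (2 * 1 / t0)) *
        Real.smoothTransition (2 - p.1 / R ^ α) *
        Real.smoothTransition (2 - 4 * ‖p.2‖ ^ 2 / R ^ 2) :=
      mul_nonneg (mul_nonneg (mul_nonneg (d0 _) (by positivity)) (n0 _)) (n0 _)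
    have g2 : hcut t0 p * (deriv Real.smoothTransition (2 - p.1 / R ^ α) * (1 / R ^ α)) *
        Real.smoothTransition (2 - 4 * ‖p.2‖ ^ 2 / R ^ 2) ≤
        K * R ^ (-α) * (Tset n (R ^ α) R).indicator (fun _ => 1) p := by
      by_cases hT : p ∈ Tset n (R ^ α) R
      · rw [Set.indicator_of_mem hT, hM, mul_one, one_div]
        have e1 : deriv Real.smoothTransition (2 - p.1 / R ^ α) * (R ^ α)⁻¹ ≤ K * (R ^ α)⁻¹ := by
          gcongr
          exact (d1 _).trans hKL
        have e0 : 0 ≤ deriv Real.smoothTransition (2 - p.1 / R ^ α) * (R ^ α)⁻¹ :=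
          mul_nonneg (d0 _) (by positivity)
        calc _ ≤ hcut t0 p * (deriv Real.smoothTransition (2 - p.1 / R ^ α) * (R ^ α)⁻¹) :=
              mul_le_of_le_one_right (mul_nonneg (n0 _) e0) (n1 _)
          _ ≤ _ := mul_le_of_le_one_left e0 (n1 _)
          _ ≤ _ := e1
      · have hT' : p.1 ≤ R ^ α ∧ ‖p.2‖ ≤ R / 2 := not_not.1 hT
        have : p.1 / R ^ α ≤ 1 := by rw [div_le_one hP]; exact hT'.1
        rw [st_deriv_zero (Or.inr (by linarith))]
        simp [hT]
    simp only [inner_zero_right, mul_zero, zero_div, sub_zero]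
    linarith
  · have h8 := hcond8 R hR
    have hms : MeasurableSet {p : Pt n | 0 < p.1 ∧ R / 2 < ‖p.2‖ ∧ ‖p.2‖ < R} :=
      (measurableSet_lt measurable_const measurable_fst).inter
        ((measurableSet_lt measurable_const measurable_snd.norm).inter
        (measurableSet_lt measurable_snd.norm measurable_const))
    rw [ae_restrict_iff' hms] at h8
    filter_upwards [ae_restrict_mem (hs_meas n), hform, ae_restrict_of_ae h8] with p hp hf h8
    set g : ℝ := - (hcut t0 p * Real.smoothTransition (2 - p.1 / R ^ α) *
        (deriv Real.smoothTransition (2 - 4 * ‖p.2‖ ^ 2 / R ^ 2) * (8 / R ^ 2))) with hg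
    have e : (fun i => pdX (zcut t0 (R ^ α) R) i p) = fun i => g * p.2 i := by
      funext i
      rw [pdX, zcut_fderiv]
      simp only [EuclideanSpace.inner_single_right, hg]
      simp
      ring
    rw [e, Qf_smul]
    have hQ : Qf a p p.2 p.2 ≤ A p * ‖p.2‖ ^ 2 := (hf p.2).2
    by_cases hx : R / 2 < ‖p.2‖ ∧ ‖p.2‖ < R
    · have hA := h8 ⟨hp, hx⟩
      have hT : p ∈ Tset n (R ^ α) R := fun h => absurd h.2 (not_le.2 hx.1)
      rw [Set.indicator_of_mem hT, mul_one]
      have hgb : g ^ 2 ≤ (L * (8 / R ^ 2)) ^ 2 := by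
        rw [hg, neg_sq]
        have e0 : 0 ≤ deriv Real.smoothTransition (2 - 4 * ‖p.2‖ ^ 2 / R ^ 2) * (8 / R ^ 2) :=
          mul_nonneg (d0 _) (by positivity)
        have e1 : deriv Real.smoothTransition (2 - 4 * ‖p.2‖ ^ 2 / R ^ 2) * (8 / R ^ 2)
          ≤ L * (8 / R ^ 2) := by gcongr; exact d1 _
        refine pow_le_pow_left₀ (mul_nonneg (mul_nonneg (n0 _) (n0 _)) e0) ?_ 2
        exact (mul_le_of_le_one_left e0 (mul_le_one₀ (n1 _) (n0 _) (n1 _))).trans e1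
      have hpow : R ^ (2 - α) = R ^ 2 * R ^ (-α) := by
        rw [sub_eq_add_neg, Real.rpow_add hR0]; norm_num
      have hxx : ‖p.2‖ ^ 2 ≤ R ^ 2 := pow_le_pow_left₀ (norm_nonneg _) hx.2.le 2
      calc g ^ 2 * Qf a p p.2 p.2 ≤ (L * (8 / R ^ 2)) ^ 2 * (A p * ‖p.2‖ ^ 2) := by
            refine (mul_le_mul_of_nonneg_left hQ (sq_nonneg _)).trans ?_
            exact mul_le_mul_of_nonneg_right hgb (mul_nonneg (hA_nonneg p) (sq_nonneg _))
        _ ≤ (L * (8 / R ^ 2)) ^ 2 * ((c * R ^ (2 - α)) * R ^ 2) := by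
            refine mul_le_mul_of_nonneg_left ?_ (sq_nonneg _)
            exact mul_le_mul hA hxx (sq_nonneg _) ((hA_nonneg p).trans hA)
        _ = 64 * c * L ^ 2 * R ^ (-α) := by
            rw [hpow]; field_simp; ring
        _ ≤ _ := by gcongr
    · have : g = 0 := by
        rw [hg, st_deriv_zero]
        · simp
        · rw [not_and_or, not_lt, not_lt] at hx
          rcases hx with hx | hx
          · right
            have : 4 * ‖p.2‖ ^ 2 / R ^ 2 ≤ 1 := by
              rw [div_le_one (by positivity)]
              nlinarith [norm_nonneg p.2]
            linarith
          · left
            have : 2 ≤ 4 * ‖p.2‖ ^ 2 / R ^ 2 := by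
              rw [le_div_iff₀ (by positivity)]
              nlinarith [norm_nonneg p.2]
            linarith
      rw [this]
      rcases ind_cases (Tset n (R ^ α) R) p with h | h <;> rw [h] <;> simp
      positivity

lemma Bset_vol {n : ℕ} {P R : ℝ} (hP : 0 < P) (hR : 0 < R) :
    volume.real (Bset n P R) =
      2 * volume.real (Metric.ball (0 : Xn n) 1) * (P * R ^ n) := by
  have h : (volume : Measure (Pt n)) (Bset n P R) = _ :=
    Measure.prod_prod (μ := (volume : Measure ℝ)) (ν := (volume : Measure (Xn n)))
      (Set.Ioc 0 (2 * P)) (Metric.closedBall (0 : Xn n) R)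
  rw [Measure.real, h, Measure.addHaar_closedBall _ _ hR.le]
  simp only [Real.volume_Ioc, ENNReal.toReal_mul, finrank_euclideanSpace, Fintype.card_fin]
  rw [ENNReal.toReal_ofReal (by linarith), ENNReal.toReal_ofReal (by positivity), Measure.real]
  ring

lemma WkC1_scale {n : ℕ} {a : Fin n → Fin n → Pt n → ℝ} {q N : ℝ} {u : Pt n → ℝ} (hN : 0 < N)
    (hu : ContDiffOn ℝ 1 u (halfSpace n)) (hu0 : ∀ p ∈ halfSpace n, 0 ≤ u p)
    (hw : WkC1 a q 1 u) : WkC1 a q (N ^ (1 - q)) (fun p => N * u p) := by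
  intro φ h1 h2 h3 h4
  have h := mul_nonneg hN.le (hw φ h1 h2 h3 h4)
  rw [← integral_const_mul] at h
  refine h.trans_eq (setIntegral_congr_fun (hs_meas n) fun p hp => ?_)
  have hd : DifferentiableAt ℝ u p :=
    (hu.contDiffAt ((hs_open n).mem_nhds hp)).differentiableAt one_ne_zero
  have e : fderiv ℝ (fun p => N * u p) p = N • fderiv ℝ u p := fderiv_const_mul hd N
  have e2 : N ^ (1 - q) * (N * u p) ^ q = N * u p ^ q := by
    rw [Real.mul_rpow hN.le (hu0 p hp), ← mul_assoc, ← Real.rpow_add hN]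
    simp
  simp only [pdT, pdX, e, e2]
  simp only [_root_.smul_apply, smul_eq_mul, mul_sub, mul_add, Finset.mul_sum]
  congr 1
  · congr 1
    · ring
    · refine Finset.sum_congr rfl fun i _ => Finset.sum_congr rfl fun j _ => by ring
  · ring

lemma endgame {Ω : Type*} [MeasurableSpace Ω] {ν : Measure Ω} {f : Ω → ℝ} {g : ℕ → Ω → ℝ}
    {Q T : ℕ → Set Ω} (hQ : AECover ν Filter.atTop Q) (hT : ∀ m, T m = (Q m)ᶜ)
    (hg : ∀ m, Integrable (g m) ν)
    (h0 : ∀ m, ∀ᵐ p ∂ν, 0 ≤ g m p) (hgf : ∀ m, ∀ᵐ p ∂ν, g m p ≤ f p)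
    (hQe : ∀ m p, p ∈ Q m → g m p = f p)
    (ha : ∃ C, ∀ m, ∫ p, g m p ∂ν ≤ 1 / 2 * (∫ p, g m p * (T m).indicator (fun _ => 1) p ∂ν) + C)
    (hb : ∀ η, 0 < η → ∃ M, 0 ≤ M ∧
      ∀ m, ∫ p, g m p ∂ν ≤ M * (∫ p, g m p * (T m).indicator (fun _ => 1) p ∂ν) + η) :
    Integrable f ν ∧ ∫ p, f p ∂ν ≤ 0 := by
  have e : ∀ m, ∫ p, g m p * (T m).indicator (fun _ => 1) p ∂ν = ∫ p in (Q m)ᶜ, g m p ∂ν := by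
    intro m
    rw [← integral_indicator (hQ.measurableSet m).compl, hT]
    refine integral_congr_ae (Filter.Eventually.of_forall fun p => ?_)
    by_cases h : p ∈ (Q m)ᶜ
    · simp only [Set.indicator_of_mem h, mul_one]
    · simp only [Set.indicator_of_notMem h, mul_zero]
  simp only [e] at ha hb
  have hJI : ∀ m, ∫ p in (Q m)ᶜ, g m p ∂ν ≤ ∫ p, g m p ∂ν :=
    fun m => setIntegral_le_integral (hg m) (h0 m)
  have hQI : ∀ m, ∫ p in Q m, f p ∂ν ≤ ∫ p, g m p ∂ν := by
    intro m
    rw [← setIntegral_congr_fun (hQ.measurableSet m) (hQe m)]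
    exact setIntegral_le_integral (hg m) (h0 m)
  have hf0 : ∀ᵐ p ∂ν, 0 ≤ f p := by
    filter_upwards [h0 0, hgf 0] with p h1 h2 using h1.trans h2
  have hfi : Integrable f ν := by
    obtain ⟨C, hC⟩ := ha
    refine hQ.integrable_of_integral_bounded_of_nonneg_ae (2 * C) (fun m => ?_) hf0
      (Filter.Eventually.of_forall fun m => ?_)
    · exact (hg m).integrableOn.congr_fun (hQe m) (hQ.measurableSet m)
    · have := hC m
      have := hJI m
      have := hQI m
      linarith
  refine ⟨hfi, ?_⟩
  have ht := hQ.integral_tendsto_of_countably_generated hfi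
  refine le_of_forall_pos_le_add fun η hη => ?_
  obtain ⟨M, hM0, hM⟩ := hb η hη
  have hkey : ∀ m, ∫ p in Q m, f p ∂ν ≤ M * (∫ p, f p ∂ν - ∫ p in Q m, f p ∂ν) + η := by
    intro m
    have h1 : ∫ p in (Q m)ᶜ, g m p ∂ν ≤ ∫ p in (Q m)ᶜ, f p ∂ν :=
      integral_mono_ae (hg m).restrict hfi.restrict (ae_restrict_of_ae (hgf m))
    have h2 := integral_add_compl (hQ.measurableSet m) hfi
    have h3 : ∫ p in (Q m)ᶜ, g m p ∂ν ≤ ∫ p, f p ∂ν - ∫ p in Q m, f p ∂ν := by linarith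
    have h4 := mul_le_mul_of_nonneg_left h3 hM0
    have := hM m
    have := hQI m
    linarith
  have := le_of_tendsto_of_tendsto' ht (((ht.const_sub _).const_mul M).add_const η) hkey
  simpa using this

lemma step {n : ℕ} {a : Fin n → Fin n → Pt n → ℝ} {q γ K C0 C lam μ α R t0 : ℝ} {k : ℕ}
    (hq : 1 < q) (hγ : 0 < γ) (hγ1 : γ < 1) (hK : 0 ≤ K) (hC0 : 0 ≤ C0)
    (hlam : 0 < lam) (hμ : 0 < μ) (hC : 0 < C) (hR : 1 < R) (hα : α = n * (q - 1))
    (ha_meas : ∀ i j, Measurable (a i j))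
    (ha_locbdd : ∀ i j, ∀ K : Set (Pt n), IsCompact K → K ⊆ halfSpace n →
      ∃ M, ∀ p ∈ K, |a i j p| ≤ M)
    (hCS : ∀ᵐ p ∂(volume.restrict (halfSpace n)), ∀ (ξ η : Fin n → ℝ) (x y : ℝ),
      2 * x * y * Qf a p η ξ ≤ x ^ 2 * Qf a p ξ ξ + y ^ 2 * Qf a p η η)
    {u : Pt n → ℝ} (hu : ContDiffOn ℝ 1 u (halfSpace n))
    (hu0 : ∀ p ∈ halfSpace n, 0 ≤ u p) (hw : WkC1 a q 1 u)
    (hζ : Cut a K (R ^ (-α)) (zcut t0 (R ^ α) R) (Tset n (R ^ α) R) (Bset n (R ^ α) R))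
    (hY : ∀ X ζ : ℝ, 0 ≤ X → 0 ≤ ζ → ζ ≤ 1 →
      ((k + 2) / (1 - γ) * K + (k + 2) ^ 2 / (2 * γ) * K) * (X ^ (1 - γ) * ζ ^ k)
        ≤ 2 ^ (-q) * (X ^ (q - γ) * ζ ^ (k + 2)) + C0)
    (hY1 : ∀ X ζ : ℝ, 0 ≤ X → 0 ≤ ζ → ζ ≤ 1 →
      ((k + 2) * K) * (X ^ (1 : ℝ) * ζ ^ k) ≤ μ / 2 * (X ^ q * ζ ^ (k + 2)) + C / 2)
    (hY2 : ∀ X ζ : ℝ, 0 ≤ X → 0 ≤ ζ → ζ ≤ 1 →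
      ((k + 2) ^ 2 / (4 * lam) * K) * (X ^ (γ + 1) * ζ ^ k)
        ≤ μ / 2 * (X ^ q * ζ ^ (k + 2)) + C / 2) :
    ∫ p in halfSpace n, u p ^ q * zcut t0 (R ^ α) R p ^ (k + 2) ≤
      μ * 2 ^ q * (∫ p in halfSpace n, u p ^ q * zcut t0 (R ^ α) R p ^ (k + 2) *
        (Tset n (R ^ α) R).indicator (fun _ => 1) p)
      + (lam * (2 / γ * (C0 + 1)) + 2 * C) * (2 * volume.real (Metric.ball (0 : Xn n) 1)) := by
  have hR0 : 0 < R := by linarith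
  obtain ⟨κ, hκ, hκ1, hκC⟩ : ∃ κ : ℝ, 0 < κ ∧ κ ≤ 1 ∧ μ * 2 ^ q * κ ^ q ≤ C := by
    have hb : 0 < C / (μ * 2 ^ q) := by positivity
    refine ⟨min 1 (C / (μ * 2 ^ q)), by positivity, min_le_left _ _, ?_⟩
    have h1 : (min 1 (C / (μ * 2 ^ q))) ^ q ≤ (min 1 (C / (μ * 2 ^ q))) ^ (1 : ℝ) :=
      Real.rpow_le_rpow_of_exponent_ge (by positivity) (min_le_left _ _) hq.le
    rw [Real.rpow_one] at h1
    have h2 := h1.trans (min_le_right _ _)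
    rw [le_div_iff₀ (by positivity)] at h2
    linarith
  set N : ℝ := R ^ (n : ℝ) with hNd
  have hN : 0 < N := by positivity
  have hMN : N ^ (1 - q) = R ^ (-α) := by
    rw [hNd, ← Real.rpow_mul hR0.le, hα]; congr 1; ring
  have hw' := WkC1_scale hN hu hu0 hw
  rw [hMN] at hw'
  have hE := energy2 hq hγ hγ1 hK (by positivity) hC0 hκ hκ1 hlam hμ hC.le hκC ha_meas ha_locbdd
    hCS (contDiffOn_const.mul hu) (fun p hp => mul_nonneg hN.le (hu0 p hp)) hw' hζ hY hY1 hY2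
  have e1 : ∫ p in halfSpace n, (N * u p) ^ q * zcut t0 (R ^ α) R p ^ (k + 2) =
      N ^ q * ∫ p in halfSpace n, u p ^ q * zcut t0 (R ^ α) R p ^ (k + 2) := by
    rw [← integral_const_mul]
    refine setIntegral_congr_fun (hs_meas n) fun p hp => ?_
    simp only [Real.mul_rpow hN.le (hu0 p hp)]
    ring
  have e2 : ∫ p in halfSpace n, (N * u p) ^ q * zcut t0 (R ^ α) R p ^ (k + 2) *
        (Tset n (R ^ α) R).indicator (fun _ => 1) p =
      N ^ q * ∫ p in halfSpace n, u p ^ q * zcut t0 (R ^ α) R p ^ (k + 2) *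
        (Tset n (R ^ α) R).indicator (fun _ => 1) p := by
    rw [← integral_const_mul]
    refine setIntegral_congr_fun (hs_meas n) fun p hp => ?_
    simp only [Real.mul_rpow hN.le (hu0 p hp)]
    ring
  have e3 : R ^ α * R ^ n = N ^ q := by
    rw [hNd, ← Real.rpow_mul hR0.le, ← Real.rpow_natCast, ← Real.rpow_add hR0, hα]
    congr 1; ring
  rw [e1, e2, Bset_vol (by positivity) hR0, e3] at hE
  have hNq : 0 < N ^ q := by positivity
  refine le_of_mul_le_mul_left (hE.trans_eq ?_) hNq
  ring

lemma exists_k {r : ℝ} (hr : r < 1) : ∃ k0 : ℕ, ∀ k : ℕ, k0 ≤ k → (k + 2 : ℝ) * r ≤ k := by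
  obtain ⟨k0, hk0⟩ := exists_nat_ge (2 * r / (1 - r))
  refine ⟨k0, fun k hk => ?_⟩
  have h : 2 * r / (1 - r) ≤ k := hk0.trans (by exact_mod_cast hk)
  rw [div_le_iff₀ (by linarith)] at h
  linarith

lemma zcut_le {n : ℕ} (t0 P R : ℝ) (p : Pt n) : zcut t0 P R p ≤ hcut t0 p := by
  have n0 : ∀ x, 0 ≤ Real.smoothTransition x := Real.smoothTransition.nonneg
  have n1 : ∀ x, Real.smoothTransition x ≤ 1 := Real.smoothTransition.le_one
  unfold zcut
  rw [mul_assoc]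
  exact mul_le_of_le_one_right (n0 _) (mul_le_one₀ (n1 _) (n0 _) (n1 _))

lemma zcut_eq {n : ℕ} {t0 P R : ℝ} (hP : 0 < P) (hR : 0 < R) {p : Pt n}
    (h : p.1 ≤ P ∧ ‖p.2‖ ≤ R / 2) : zcut t0 P R p = hcut t0 p := by
  have h1 : p.1 / P ≤ 1 := by rw [div_le_one hP]; exact h.1
  have h2 : 4 * ‖p.2‖ ^ 2 / R ^ 2 ≤ 1 := by
    rw [div_le_one (by positivity)]
    nlinarith [norm_nonneg p.2]
  unfold zcut
  rw [Real.smoothTransition.one_of_one_le (by linarith),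
    Real.smoothTransition.one_of_one_le (by linarith)]
  simp
/-- the Fujita-type theorem for non-negative weak super-solutions
of the Cauchy problem with arbitrary initial data (Theorem 6). -/
theorem fujita_nonneg_supersol
    (n : ℕ) (hn : 1 ≤ n) (α c q : ℝ) (hα : 0 < α) (hc : 0 < c)
    (hq1 : 1 < q) (hq2 : q ≤ 1 + α / n)
    (a : Fin n → Fin n → Pt n → ℝ) (A : Pt n → ℝ)
    (ha_meas : ∀ i j, Measurable (a i j))
    (ha_locbdd : ∀ i j, ∀ K : Set (Pt n), IsCompact K → K ⊆ halfSpace n →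
      ∃ M, ∀ p ∈ K, |a i j p| ≤ M)
    (ha_symm : ∀ i j, ∀ᵐ p ∂(volume.restrict (halfSpace n)), a i j p = a j i p)
    (hA_meas : Measurable A)
    (hA_nonneg : ∀ p, 0 ≤ A p)
    (hA_locbdd : ∀ K : Set (Pt n), IsCompact K → K ⊆ halfSpace n →
      ∃ M, ∀ p ∈ K, A p ≤ M)
    (hform : ∀ᵐ p ∂(volume.restrict (halfSpace n)), ∀ ξ : Xn n,
      0 ≤ ∑ i, ∑ j, a i j p * ξ i * ξ j ∧
      ∑ i, ∑ j, a i j p * ξ i * ξ j ≤ A p * ‖ξ‖ ^ 2)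
    (hcond8 : Cond8 A α c)
    (u : Pt n → ℝ)
    -- `u` is continuous on `[0,∞) × ℝⁿ`; the initial data `u(0,·)` is
    -- unrestricted
    (hu_cont : ContinuousOn u {p : Pt n | 0 ≤ p.1})
    (hu : ContDiffOn ℝ 1 u (halfSpace n))
    (hu_int : LocallyIntegrableOn (fun p => |u p| ^ q) (halfSpace n) volume)
    (hsupersol : WeakSuperSol a q u)
    (hu_nonneg : ∀ p, 0 ≤ p.1 → 0 ≤ u p) :
    ∀ p ∈ halfSpace n, u p = 0 := by
  have hn0 : (0 : ℝ) < n := by exact_mod_cast hn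
  have hu0 : ∀ p ∈ halfSpace n, 0 ≤ u p := fun p hp => hu_nonneg p (le_of_lt hp)
  have hw := weak_C1 hq1 ha_meas ha_locbdd hu hsupersol hu_nonneg
  have hCS : ∀ᵐ p ∂(volume.restrict (halfSpace n)), ∀ (ξ η : Fin n → ℝ) (x y : ℝ),
      2 * x * y * Qf a p η ξ ≤ x ^ 2 * Qf a p ξ ξ + y ^ 2 * Qf a p η η := by
    have hsy : ∀ᵐ p ∂(volume.restrict (halfSpace n)), ∀ i j, a i j p = a j i p :=
      ae_all_iff.2 fun i => ae_all_iff.2 fun j => ha_symm i j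
    filter_upwards [hsy, hform] with p h1 h2 ξ η x y
    exact Qf_cs h1 (fun x => (h2 (WithLp.toLp 2 x)).1) ξ η x y
  -- reduction to the critical case
  obtain ⟨α', hα'⟩ : ∃ α' : ℝ, α' = n * (q - 1) := ⟨_, rfl⟩
  have hα'0 : 0 < α' := by rw [hα']; exact mul_pos hn0 (by linarith)
  have hα'1 : α' ≤ α := by
    have : q - 1 ≤ α / n := by linarith
    rw [le_div_iff₀ hn0] at this
    rw [hα']; linarith
  have h8 : Cond8 A α' c := by
    intro R hR
    filter_upwards [hcond8 R hR] with p hp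
    refine hp.trans (mul_le_mul_of_nonneg_left ?_ hc.le)
    exact Real.rpow_le_rpow_of_exponent_le hR.le (by linarith)
  obtain ⟨L, hL0, hL⟩ := st_deriv_bd
  obtain ⟨K, hKL, hKc⟩ : ∃ K, L ≤ K ∧ 64 * c * L ^ 2 ≤ K :=
    ⟨max L (64 * c * L ^ 2), le_max_left _ _, le_max_right _ _⟩
  have hK : 0 ≤ K := hL0.le.trans hKL
  -- parameters
  obtain ⟨γ, hγ, hγ1, hγq⟩ : ∃ γ : ℝ, 0 < γ ∧ γ < 1 ∧ γ < q - 1 := by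
    have : 0 < min 1 (q - 1) := lt_min one_pos (by linarith)
    refine ⟨min 1 (q - 1) / 2, by linarith, ?_, ?_⟩
    · linarith [min_le_left 1 (q - 1)]
    · linarith [min_le_right 1 (q - 1)]
  obtain ⟨k1, hk1⟩ := exists_k (r := (1 - γ) / (q - γ)) (by rw [div_lt_one] <;> linarith)
  obtain ⟨k2, hk2⟩ := exists_k (r := 1 / q) (by rw [div_lt_one] <;> linarith)
  obtain ⟨k3, hk3⟩ := exists_k (r := (γ + 1) / q) (by rw [div_lt_one] <;> linarith)
  obtain ⟨k, hka, hkb, hkc⟩ : ∃ k, k1 ≤ k ∧ k2 ≤ k ∧ k3 ≤ k :=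
    ⟨max k1 (max k2 k3), by simp, by simp, by simp⟩
  have h1γ : 0 < 1 - γ := by linarith
  obtain ⟨C0, hC0, hY⟩ := sc_youngA
    (K := (k + 2) / (1 - γ) * K + (k + 2) ^ 2 / (2 * γ) * K) h1γ
    (by linarith : 1 - γ < q - γ) (by positivity) (hk1 k hka) (2 ^ (-q)) (by positivity)
  obtain ⟨V, hV⟩ : ∃ V, V = 2 * volume.real (Metric.ball (0 : Xn n) 1) := ⟨_, rfl⟩
  have hV0 : 0 ≤ V := by rw [hV]; positivity
  intro p0 hp0
  have ht0 : 0 < p0.1 := hp0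
  obtain ⟨t0, ht0d⟩ : ∃ t0, t0 = p0.1 := ⟨_, rfl⟩
  rw [← ht0d] at ht0
  have hcut' : ∀ R : ℝ, 1 < R → Cut a K (R ^ (-α')) (zcut t0 (R ^ α') R)
      (Tset n (R ^ α') R) (Bset n (R ^ α') R) := fun R hR =>
    zcut_cut hA_nonneg hform h8 ht0 hR hL hKL hKc
  have hRm : ∀ m : ℕ, (1 : ℝ) < m + 2 := fun m => by
    have : (0 : ℝ) ≤ m := m.cast_nonneg
    linarith
  have hR0 : ∀ m : ℕ, (0 : ℝ) < m + 2 := fun m => by linarith [hRm m]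
  have hhc : Continuous (hcut (n := n) t0) :=
    st_smooth.continuous.comp (by fun_prop)
  have hh0 : ∀ p : Pt n, 0 ≤ hcut t0 p := fun p => Real.smoothTransition.nonneg _
  have hQm : ∀ m : ℕ, MeasurableSet (Tset n (((m : ℝ) + 2) ^ α') (m + 2))ᶜ :=
    fun m => (hcut' _ (hRm m)).Tmeas.compl
  have hmemQ : ∀ (m : ℕ) (p : Pt n), p ∈ (Tset n (((m : ℝ) + 2) ^ α') (m + 2))ᶜ ↔
      (p.1 ≤ ((m : ℝ) + 2) ^ α' ∧ ‖p.2‖ ≤ ((m : ℝ) + 2) / 2) := fun m p => not_not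
  have hend := endgame (ν := volume.restrict (halfSpace n))
    (f := fun p : Pt n => u p ^ q * hcut t0 p ^ (k + 2))
    (g := fun m p => u p ^ q * zcut t0 (((m : ℝ) + 2) ^ α') (m + 2) p ^ (k + 2))
    (Q := fun m => (Tset n (((m : ℝ) + 2) ^ α') (m + 2))ᶜ)
    (T := fun m => Tset n (((m : ℝ) + 2) ^ α') (m + 2))
    ⟨Filter.Eventually.of_forall fun p => by
      have tn : Filter.Tendsto (fun m : ℕ => (m : ℝ) + 2) Filter.atTop Filter.atTop :=
        Filter.tendsto_atTop_add_const_right _ _ tendsto_natCast_atTop_atTop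
      have t1 := (tendsto_rpow_atTop hα'0).comp tn
      filter_upwards [t1.eventually_ge_atTop p.1, tn.eventually_ge_atTop (2 * ‖p.2‖)] with m h1 h2
      rw [hmemQ]
      exact ⟨h1, by linarith⟩, hQm⟩
    (fun m => (compl_compl _).symm)
    (fun m => by
      have hz := hcut' _ (hRm m)
      refine integ_cont ((hu.continuousOn.rpow_const fun _ _ => Or.inr (by linarith)).mul
        (hz.smooth.continuous.pow _).continuousOn) hz.cpt hz.supp ?_
      intro p _ hp
      simp [image_eq_zero_of_notMem_tsupport hp])
    (fun m => by
      filter_upwards [ae_restrict_mem (hs_meas n)] with p hp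
      have := hu0 p hp
      have := (hcut' _ (hRm m)).nonneg p
      positivity)
    (fun m => by
      filter_upwards [ae_restrict_mem (hs_meas n)] with p hp
      have := hu0 p hp
      have := (hcut' _ (hRm m)).nonneg p
      have := zcut_le t0 (((m : ℝ) + 2) ^ α') (m + 2) p
      gcongr)
    (fun m p hp => by
      have h := zcut_eq (t0 := t0) (Real.rpow_pos_of_pos (hR0 m) α') (hR0 m) ((hmemQ m p).1 hp)
      simp only [h])
    (by
      obtain ⟨C1, hC1, hY1⟩ := sc_youngA (K := (k + 2) * K) one_pos hq1 (by positivity)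
        (hk2 k hkb) (2 ^ (-q) / 2 / 2) (by positivity)
      obtain ⟨C2, hC2, hY2⟩ := sc_youngA (K := (k + 2) ^ 2 / (4 * 1) * K)
        (by linarith : 0 < γ + 1) (by linarith : γ + 1 < q) (by positivity)
        (hk3 k hkc) (2 ^ (-q) / 2 / 2) (by positivity)
      refine ⟨(1 * (2 / γ * (C0 + 1)) + 2 * (2 * (C1 + C2))) *
        (2 * volume.real (Metric.ball (0 : Xn n) 1)), fun m => ?_⟩
      have h := step (t0 := t0) (C := 2 * (C1 + C2)) hq1 hγ hγ1 hK hC0.le one_pos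
        (μ := 2 ^ (-q) / 2) (by positivity) (by positivity) (hRm m) hα' ha_meas ha_locbdd hCS hu hu0
        hw (hcut' _ (hRm m)) hY
        (fun X ζ h1 h2 h3 => (hY1 X ζ h1 h2 h3).trans (by linarith))
        (fun X ζ h1 h2 h3 => (hY2 X ζ h1 h2 h3).trans (by linarith))
      rw [show (2 : ℝ) ^ (-q) / 2 * 2 ^ q = 1 / 2 by
        rw [Real.rpow_neg (by norm_num)]; field_simp] at h
      exact h)
    (by
      intro η hη
      obtain ⟨D, hD⟩ : ∃ D, D = 2 / γ * (C0 + 1) := ⟨_, rfl⟩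
      have hD0 : 0 ≤ D := by rw [hD]; positivity
      obtain ⟨lam, hlam, hlam1⟩ : ∃ lam, 0 < lam ∧ lam * (D * V) ≤ η / 2 := by
        refine ⟨η / (2 * (D * V + 1)), by positivity, ?_⟩
        rw [div_mul_eq_mul_div, div_le_div_iff₀ (by positivity) (by norm_num)]
        nlinarith
      obtain ⟨C, hC, hCV⟩ : ∃ C, 0 < C ∧ 2 * C * V ≤ η / 2 := by
        refine ⟨η / (4 * (V + 1)), by positivity, ?_⟩
        rw [show 2 * (η / (4 * (V + 1))) * V = η * V / (2 * (V + 1)) by field_simp; ring,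
          div_le_div_iff₀ (by positivity) (by norm_num)]
        nlinarith
      obtain ⟨M1, hM1, hY1⟩ := sc_youngB (K := (k + 2) * K) one_pos hq1 (by positivity)
        (hk2 k hkb) (C / 2) (by positivity)
      obtain ⟨M2, hM2, hY2⟩ := sc_youngB (K := (k + 2) ^ 2 / (4 * lam) * K)
        (by linarith : 0 < γ + 1) (by linarith : γ + 1 < q) (by positivity)
        (hk3 k hkc) (C / 2) (by positivity)
      refine ⟨2 * (M1 + M2) * 2 ^ q, by positivity, fun m => ?_⟩
      have h := step (t0 := t0) (C := C) hq1 hγ hγ1 hK hC0.le hlam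
        (μ := 2 * (M1 + M2)) (by positivity) (by positivity) (hRm m) hα' ha_meas ha_locbdd hCS hu
        hu0 hw (hcut' _ (hRm m)) hY
        (fun X ζ h1 h2 h3 => (hY1 X ζ h1 h2 h3).trans (by
          have : 0 ≤ X ^ q * ζ ^ (k + 2) := by positivity
          nlinarith))
        (fun X ζ h1 h2 h3 => (hY2 X ζ h1 h2 h3).trans (by
          have : 0 ≤ X ^ q * ζ ^ (k + 2) := by positivity
          nlinarith))
      rw [← hV, ← hD] at h
      refine h.trans ?_
      have : (lam * D + 2 * C) * V ≤ η := by nlinarith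
      linarith)
  obtain ⟨hfi, hf⟩ := hend
  have hfc : ContinuousOn (fun p : Pt n => u p ^ q * hcut t0 p ^ (k + 2)) (halfSpace n) :=
    (hu.continuousOn.rpow_const fun _ _ => Or.inr (by linarith)).mul (hhc.pow _).continuousOn
  have hf0 : 0 ≤ᵐ[volume.restrict (halfSpace n)]
      (fun p : Pt n => u p ^ q * hcut t0 p ^ (k + 2)) := by
    filter_upwards [ae_restrict_mem (hs_meas n)] with p hp
    have := hu0 p hp
    have := hh0 p
    show 0 ≤ u p ^ q * hcut t0 p ^ (k + 2)
    positivity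
  have hz := (integral_eq_zero_iff_of_nonneg_ae hf0 hfi).1
    (le_antisymm hf (integral_nonneg_of_ae hf0))
  have := haar_vol n
  have hzz := Measure.eqOn_open_of_ae_eq hz (hs_open n) hfc continuousOn_const hp0
  have h1 : hcut t0 p0 = 1 := by
    refine Real.smoothTransition.one_of_one_le ?_
    rw [← ht0d, mul_div_assoc, div_self ht0.ne']; norm_num
  have h2 : u p0 ^ q = 0 := by simpa [h1] using hzz
  exact (Real.rpow_eq_zero (hu0 p0 hp0) (by linarith)).1 h2
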